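/- Suppose that p = p(n) satisfies p = log^{-o(1)} n (for example, p constant). Then for each vertex v of G(n,p), asymptotically almost surely pt_pzf(G(n,p), v) = (1+o(1)) log₂ log₂ n. -/

import Mathlib

open Finset Filter Real
open scoped Classical

namespace PZF

variable {V : Type*} [Fintype V] [DecidableEq V]

/-- The closed degree of `u` into the set `B`, i.e. `|N[u] ∩ B|`. -/
noncomputable def closedDegIn (G : SimpleGraph V) (B : Finset V) (u : V) : ℕ :=
  ((insert u (G.neighborSet u)) ∩ (B : Set V)).ncard

/-- The degree of `u` in `G`. -/
noncomputable def deg (G : SimpleGraph V) (u : V) : ℕ :=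
  (G.neighborSet u).ncard

/-- The probability that the blue vertex `u` forces its white neighbour `v` in one round of
probabilistic zero forcing, when the current blue set is `B`: it equals `|N[u] ∩ B| / deg u`
when `u` is blue, `v` is a white neighbour of `u`, and `0` otherwise. -/
noncomputable def edgeForceProb (G : SimpleGraph V) (B : Finset V) (u v : V) : ℝ :=
  if G.Adj u v ∧ u ∈ B ∧ v ∉ B then (closedDegIn G B u : ℝ) / (deg G u : ℝ) else 0

/-- Given per-ordered-pair forcing probabilities `q u v` (each attempt independent), the
probability that one round starting from the blue set `B` produces exactly the blue set `B'`. -/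
noncomputable def stepOfQ (q : V → V → ℝ) (B B' : Finset V) : ℝ :=
  if B ⊆ B' then
    (∏ v ∈ B' \ B, (1 - ∏ u ∈ B, (1 - q u v))) * ∏ v ∈ B'ᶜ, ∏ u ∈ B, (1 - q u v)
  else 0

/-- The transition rule of standard probabilistic zero forcing, as a function of the history
(the list of blue sets so far; only the current blue set matters). -/
noncomputable def stdStep (G : SimpleGraph V) (hist : List (Finset V)) (B' : Finset V) : ℝ :=
  stepOfQ (edgeForceProb G (hist.getLastD ∅)) (hist.getLastD ∅) B'

/-- Probability of a given future trajectory, given the history so far. -/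
noncomputable def seqProbAux (step : List (Finset V) → Finset V → ℝ) :
    List (Finset V) → List (Finset V) → ℝ
  | _, [] => 1
  | hist, B :: rest => step hist B * seqProbAux step (hist ++ [B]) rest

/-- The probability that, running the process given by the transition rule `step` from the
initial blue set `S` for `ℓ` rounds, the resulting trajectory (including the initial set)
satisfies the predicate `E`. -/
noncomputable def trajEventProb (step : List (Finset V) → Finset V → ℝ) (S : Finset V)
    (ℓ : ℕ) (E : List (Finset V) → Prop) : ℝ :=
  ∑ f : Fin ℓ → Finset V,
    if E (S :: List.ofFn f) then seqProbAux step [S] (List.ofFn f) else 0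

/-- `P(A(S,T,ℓ))`: the probability that, starting probabilistic zero forcing from the blue
set `S`, after `ℓ` rounds every vertex of `T` is blue. -/
noncomputable def probForced (G : SimpleGraph V) (S T : Finset V) (ℓ : ℕ) : ℝ :=
  trajEventProb (stdStep G) S ℓ fun traj => T ⊆ traj.getLastD ∅

/-- `P(pt_pzf(G,S) ≤ ℓ)`: the probability that all vertices are blue after `ℓ` rounds. -/
noncomputable def probAllBlue (G : SimpleGraph V) (S : Finset V) (ℓ : ℕ) : ℝ :=
  probForced G S Finset.univ ℓ

/-- The probability of a fixed graph `G` under the Erdős–Rényi measure `G(n,p)`. -/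
noncomputable def erProb (n : ℕ) (p : ℝ) (G : SimpleGraph (Fin n)) : ℝ :=
  p ^ G.edgeSet.ncard * (1 - p) ^ (n.choose 2 - G.edgeSet.ncard)

/-- The probability that `G(n,p)` satisfies the property `E`. -/
noncomputable def graphProb (n : ℕ) (p : ℝ) (E : SimpleGraph (Fin n) → Prop) : ℝ :=
  ∑ G : SimpleGraph (Fin n), if E G then erProb n p G else 0

/-- `P(pt_pzf(G(n,p), v) ≤ ℓ)`: the joint probability (over the random graph and the forcing
randomness) that probabilistic zero forcing started at `{v}` turns all of `G(n,p)` blue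
within `ℓ` rounds. -/
noncomputable def prPZFwithin (n : ℕ) (p : ℝ) (v : Fin n) (ℓ : ℕ) : ℝ :=
  ∑ G : SimpleGraph (Fin n), erProb n p G * probAllBlue G {v} ℓ

end PZF

/-!
In one round the expected number of blue vertices at most squares, so the expected logarithm of
that number at most doubles; hence `log₂ log₂ n - ω(1)` rounds do not suffice on any graph.

Conversely, `G(n, p)` typically has all codegrees of order at least `p² n`. On such a graph the
degrees are comparable to `n` and each vertex of the blue set `B` has many common neighbours with
any other vertex, so `∑ u ∈ B, |N[u] ∩ B|`, suitably scaled and truncated, squares in each round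
with high probability. This takes `log₂ log₂ n` rounds, once a burn-in around the starting vertex,
which costs only `O(log log log n + log (1 / p)) = o(log log n)` rounds, has provided a large
enough initial value. Two more rounds colour everything.
-/

namespace PZF

section BernoulliSubset

variable {α ι : Type*} [DecidableEq α]

lemma prod_one_add_mul_indicator_eq_exp (D : ι → Finset α) (W : Finset ι) (S : Finset α) :
    ∏ w ∈ W, (1 + (exp (-1) - 1) * {S | D w ⊆ S}.indicator (1 : Finset α → ℝ) S) =
      exp (-#{w ∈ W | D w ⊆ S}) := by
  rw [Finset.card_filter, Nat.cast_sum, ← Finset.sum_neg_distrib, Real.exp_sum]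
  refine Finset.prod_congr rfl fun w _ => ?_
  by_cases hw : D w ⊆ S <;> simp [hw]

lemma prod_one_add_mul_le_exp {a : ι → ℝ} (W : Finset ι) (ha : ∀ w, a w ∈ Set.Icc 0 1) :
    ∏ w ∈ W, (1 + (exp (-1) - 1) * a w) ≤ exp (-(5 / 8) * ∑ w ∈ W, a w) := by
  rw [Finset.mul_sum, Real.exp_sum]
  have hexp : exp (-1) ≤ 3 / 8 := by linarith [exp_neg_one_lt_d9]
  refine Finset.prod_le_prod (fun w _ => ?_) fun w _ => ?_
  · nlinarith [(ha w).1, (ha w).2, exp_pos (-1)]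
  · nlinarith [(ha w).1, Real.add_one_le_exp (-(5 / 8) * a w)]

variable [Fintype α] {q : α → ℝ}

/-- The probability that the random subset of `α` containing each `a` independently with
probability `q a` equals `S`. -/
noncomputable def bernoulliWeight (q : α → ℝ) (S : Finset α) : ℝ :=
  (∏ a ∈ S, q a) * ∏ a ∈ Sᶜ, (1 - q a)

/-- Expectation over the random subset of `α` containing each `a` independently with probability
`q a`, as a linear functional on the functions of that subset. -/
noncomputable def bernoulliExp (q : α → ℝ) : (Finset α → ℝ) →ₗ[ℝ] ℝ :=
  ∑ S, bernoulliWeight q S • LinearMap.proj S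

/-- Probability that the random subset of `α` containing each `a` independently with probability
`q a` belongs to `E`. -/
noncomputable def bernoulliProb (q : α → ℝ) (E : Set (Finset α)) : ℝ :=
  bernoulliExp q (E.indicator 1)

lemma bernoulliExp_apply (q : α → ℝ) (φ : Finset α → ℝ) :
    bernoulliExp q φ = ∑ S, bernoulliWeight q S * φ S := by
  simp [bernoulliExp]

lemma bernoulliProb_superset (q : α → ℝ) (D : Finset α) :
    bernoulliProb q {S | D ⊆ S} = ∏ a ∈ D, q a := by
  have expand := Fintype.prod_add q fun a => if a ∈ D then 0 else 1 - q a
  have factor (a : α) : (q a + if a ∈ D then 0 else 1 - q a) = if a ∈ D then q a else 1 := by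
    split_ifs <;> ring
  simp only [factor, Finset.prod_ite_mem, Finset.univ_inter] at expand
  rw [expand, bernoulliProb, bernoulliExp_apply]
  refine Finset.sum_congr rfl fun S _ => ?_
  rw [bernoulliWeight, mul_assoc]
  congr 1
  by_cases hDS : D ⊆ S
  · rw [Set.indicator_of_mem (Set.mem_ofPred.2 hDS), Pi.one_apply, mul_one]
    exact Finset.prod_congr rfl fun a ha => (if_neg fun haD => mem_compl.1 ha (hDS haD)).symm
  · obtain ⟨a, haD, haS⟩ := Finset.not_subset.1 hDS
    rw [Set.indicator_of_notMem (by exact hDS), mul_zero]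
    exact (Finset.prod_eq_zero (i := a) (mem_compl.2 haS) (by rw [if_pos haD])).symm

lemma bernoulliExp_const (q : α → ℝ) (c : ℝ) : bernoulliExp q (fun _ => c) = c := by
  have total : bernoulliExp q 1 = 1 := by simpa [bernoulliProb] using bernoulliProb_superset q ∅
  have scale : (fun _ : Finset α => c) = c • 1 := by ext; simp
  rw [scale, map_smul, total, smul_eq_mul, mul_one]

lemma bernoulliWeight_nonneg (hq : ∀ a, q a ∈ Set.Icc 0 1) (S : Finset α) :
    0 ≤ bernoulliWeight q S :=
  mul_nonneg (Finset.prod_nonneg fun a _ => (hq a).1)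
    (Finset.prod_nonneg fun a _ => sub_nonneg.2 (hq a).2)

lemma bernoulliExp_mono_of_one_mem (hq : ∀ a, q a ∈ Set.Icc 0 1) {φ ψ : Finset α → ℝ}
    (h : ∀ S, (∀ a, q a = 1 → a ∈ S) → φ S ≤ ψ S) : bernoulliExp q φ ≤ bernoulliExp q ψ := by
  rw [bernoulliExp_apply, bernoulliExp_apply]
  refine Finset.sum_le_sum fun S _ => ?_
  by_cases hS : ∀ a, q a = 1 → a ∈ S
  · exact mul_le_mul_of_nonneg_left (h S hS) (bernoulliWeight_nonneg hq S)
  · push Not at hS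
    obtain ⟨a, hqa, haS⟩ := hS
    have null : bernoulliWeight q S = 0 := by
      rw [bernoulliWeight, Finset.prod_eq_zero (mem_compl.2 haS) (by rw [hqa, sub_self]), mul_zero]
    rw [null, zero_mul, zero_mul]

lemma bernoulliExp_mono (hq : ∀ a, q a ∈ Set.Icc 0 1) {φ ψ : Finset α → ℝ}
    (h : ∀ S, φ S ≤ ψ S) : bernoulliExp q φ ≤ bernoulliExp q ψ :=
  bernoulliExp_mono_of_one_mem hq fun S _ => h S

lemma bernoulliProb_mem (q : α → ℝ) (a : α) : bernoulliProb q {S | a ∈ S} = q a := by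
  simpa using bernoulliProb_superset q {a}

lemma bernoulliProb_notMem (q : α → ℝ) (a : α) : bernoulliProb q {S | a ∉ S} = 1 - q a := by
  have hcompl : ({S | a ∉ S} : Set (Finset α)).indicator (1 : Finset α → ℝ) =
      (fun _ => 1) - {S | a ∈ S}.indicator 1 := by
    ext S
    by_cases ha : a ∈ S <;> simp [ha]
  rw [bernoulliProb, hcompl, map_sub, bernoulliExp_const, ← bernoulliProb, bernoulliProb_mem]

lemma bernoulliExp_card (q : α → ℝ) : bernoulliExp q (fun S => (#S : ℝ)) = ∑ a, q a := by
  have count : (fun S : Finset α => (#S : ℝ)) = ∑ a, {S : Finset α | a ∈ S}.indicator 1 := by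
    ext S
    simp [Set.indicator_apply]
  rw [count, map_sum]
  exact Finset.sum_congr rfl fun a _ => bernoulliProb_mem q a

lemma bernoulliProb_le_sum (hq : ∀ a, q a ∈ Set.Icc 0 1) {E : Set (Finset α)} (s : Finset ι)
    {F : ι → Set (Finset α)} (h : E ⊆ ⋃ i ∈ s, F i) :
    bernoulliProb q E ≤ ∑ i ∈ s, bernoulliProb q (F i) := by
  simp only [bernoulliProb]
  rw [← map_sum]
  refine bernoulliExp_mono hq fun S => ?_
  have nonneg (i : ι) : 0 ≤ (F i).indicator (1 : Finset α → ℝ) S :=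
    Set.indicator_nonneg (fun _ _ => zero_le_one) S
  rw [Finset.sum_apply]
  refine Set.indicator_apply_le' (fun hS => ?_) fun _ => Finset.sum_nonneg fun i _ => nonneg i
  obtain ⟨i, hi, hSi⟩ := Set.mem_iUnion₂.1 (h hS)
  refine le_trans ?_ (Finset.single_le_sum (fun i _ => nonneg i) hi)
  rw [Set.indicator_of_mem hSi]

lemma bernoulliProb_mono (hq : ∀ a, q a ∈ Set.Icc 0 1) {E F : Set (Finset α)} (h : E ⊆ F) :
    bernoulliProb q E ≤ bernoulliProb q F :=
  bernoulliExp_mono hq fun S => Set.indicator_le_indicator_of_subset h (fun _ => zero_le_one) S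

lemma bernoulliProb_union_le (hq : ∀ a, q a ∈ Set.Icc 0 1) (E F : Set (Finset α)) :
    bernoulliProb q (E ∪ F) ≤ bernoulliProb q E + bernoulliProb q F := by
  have h := bernoulliProb_le_sum hq (E := E ∪ F) Finset.univ (F := fun b : Bool => cond b E F)
    (by simp [Set.union_eq_iUnion])
  simpa using h

lemma bernoulliExp_indicator_superset_mul_prod (q : α → ℝ) (r : ℝ) (D : ι → Finset α)
    (W : Finset ι) (D₀ : Finset α) (hD : (W : Set ι).PairwiseDisjoint D)
    (hD₀ : ∀ w ∈ W, Disjoint D₀ (D w)) :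
    bernoulliExp q (fun S => {S | D₀ ⊆ S}.indicator 1 S *
        ∏ w ∈ W, (1 + r * {S | D w ⊆ S}.indicator 1 S)) =
      (∏ a ∈ D₀, q a) * ∏ w ∈ W, (1 + r * ∏ a ∈ D w, q a) := by
  induction W using Finset.induction_on generalizing D₀ with
  | empty => simpa [bernoulliProb] using bernoulliProb_superset q D₀
  | insert w W hw ih =>
    have hDW : (W : Set ι).PairwiseDisjoint D := hD.subset (by simp)
    have hD₀W : ∀ v ∈ W, Disjoint D₀ (D v) := fun v hv => hD₀ v (mem_insert_of_mem hv)
    have hD₀w : Disjoint D₀ (D w) := hD₀ w (mem_insert_self w W)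
    have hDw : ∀ v ∈ W, Disjoint (D₀ ∪ D w) (D v) := fun v hv =>
      disjoint_union_left.2 ⟨hD₀W v hv, hD (by simp) (by simp [hv]) fun h => hw (h ▸ hv)⟩
    have split : (fun S => {S | D₀ ⊆ S}.indicator (1 : Finset α → ℝ) S *
          ∏ v ∈ insert w W, (1 + r * {S | D v ⊆ S}.indicator (1 : Finset α → ℝ) S)) =
        (fun S => {S | D₀ ⊆ S}.indicator 1 S *
          ∏ v ∈ W, (1 + r * {S | D v ⊆ S}.indicator 1 S)) +
        r • fun S => {S | D₀ ∪ D w ⊆ S}.indicator 1 S *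
          ∏ v ∈ W, (1 + r * {S | D v ⊆ S}.indicator 1 S) := by
      ext S
      have hmul : {S | D₀ ∪ D w ⊆ S}.indicator (1 : Finset α → ℝ) S =
          {S | D₀ ⊆ S}.indicator 1 S * {S | D w ⊆ S}.indicator 1 S := by
        by_cases h₀ : D₀ ⊆ S <;> by_cases hw : D w ⊆ S <;> simp [union_subset_iff, h₀, hw]
      rw [prod_insert hw, Pi.add_apply, Pi.smul_apply, smul_eq_mul, hmul]
      ring
    rw [split, map_add, map_smul, ih D₀ hDW hD₀W, ih (D₀ ∪ D w) hDW hDw, prod_insert hw,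
      prod_union hD₀w, smul_eq_mul]
    ring

/-- The exponential moment method with parameter `-1`; `3 / 8 = 5 / 8 - 1 / 4`, where `5 / 8` is
a lower bound for `1 - e⁻¹`. -/
lemma bernoulliProb_superset_and_count_lt_le (hq : ∀ a, q a ∈ Set.Icc 0 1) (D₀ : Finset α)
    (W : Finset ι) (D : ι → Finset α) (hD : (W : Set ι).PairwiseDisjoint D)
    (hD₀ : ∀ w ∈ W, Disjoint D₀ (D w)) {m : ℝ} (hm : m ≤ ∑ w ∈ W, ∏ a ∈ D w, q a) :
    bernoulliProb q {S | D₀ ⊆ S ∧ #{w ∈ W | D w ⊆ S} < m / 4} ≤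
      (∏ a ∈ D₀, q a) * exp (-(3 / 8) * m) := by
  have tilt (S : Finset α) :
      {S | D₀ ⊆ S ∧ #{w ∈ W | D w ⊆ S} < m / 4}.indicator (1 : Finset α → ℝ) S ≤
        exp (m / 4) * ({S | D₀ ⊆ S}.indicator 1 S *
          ∏ w ∈ W, (1 + (exp (-1) - 1) * {S | D w ⊆ S}.indicator 1 S)) := by
    rw [prod_one_add_mul_indicator_eq_exp]
    refine Set.indicator_apply_le' (fun hS => ?_) fun _ => ?_
    · rw [Set.indicator_of_mem (Set.mem_ofPred.2 hS.1), Pi.one_apply, one_mul, ← Real.exp_add]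
      exact Real.one_le_exp (by linarith [hS.2])
    · exact mul_nonneg (exp_pos _).le (mul_nonneg
        (Set.indicator_nonneg (fun _ _ => zero_le_one) S) (exp_pos _).le)
  calc bernoulliProb q {S | D₀ ⊆ S ∧ #{w ∈ W | D w ⊆ S} < m / 4}
      ≤ exp (m / 4) * ((∏ a ∈ D₀, q a) *
          ∏ w ∈ W, (1 + (exp (-1) - 1) * ∏ a ∈ D w, q a)) := by
        rw [← bernoulliExp_indicator_superset_mul_prod q _ D W D₀ hD hD₀, ← smul_eq_mul,
          ← map_smul]
        exact bernoulliExp_mono hq tilt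
    _ ≤ exp (m / 4) * ((∏ a ∈ D₀, q a) * exp (-(5 / 8) * m)) := by
        gcongr
        · exact Finset.prod_nonneg fun a _ => (hq a).1
        · refine (prod_one_add_mul_le_exp W fun w => ⟨?_, ?_⟩).trans
            (Real.exp_le_exp.2 (by linarith))
          · exact Finset.prod_nonneg fun a _ => (hq a).1
          · exact Finset.prod_le_one (fun a _ => (hq a).1) fun a _ => (hq a).2
    _ = (∏ a ∈ D₀, q a) * exp (-(3 / 8) * m) := by
        rw [mul_left_comm, ← Real.exp_add]
        ring_nf

lemma bernoulliProb_superset_and_card_inter_lt_le (hq : ∀ a, q a ∈ Set.Icc 0 1)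
    {D₀ A : Finset α} (hdisj : Disjoint D₀ A) {m : ℝ} (hm : m ≤ ∑ a ∈ A, q a) :
    bernoulliProb q {S | D₀ ⊆ S ∧ (#(S ∩ A) : ℝ) < m / 4} ≤
      (∏ a ∈ D₀, q a) * exp (-(3 / 8) * m) := by
  have h := bernoulliProb_superset_and_count_lt_le hq D₀ A (fun a => {a})
    (fun a _ b _ hab => by simpa using hab)
    (fun a ha => by simpa using fun h => disjoint_left.1 hdisj h ha) (by simpa using hm)
  simpa only [singleton_subset_iff, Finset.filter_mem_eq_inter, inter_comm A] using h

lemma bernoulliProb_card_inter_lt_le (hq : ∀ a, q a ∈ Set.Icc 0 1) (A : Finset α) {m : ℝ}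
    (hm : m ≤ ∑ a ∈ A, q a) :
    bernoulliProb q {S | (#(S ∩ A) : ℝ) < m / 4} ≤ exp (-(3 / 8) * m) := by
  simpa using bernoulliProb_superset_and_card_inter_lt_le hq (disjoint_empty_left A) hm

end BernoulliSubset

section Round

variable {V : Type*}

lemma closedDegIn_mono (G : SimpleGraph V) {B S : Finset V} (h : B ⊆ S) (u : V) :
    closedDegIn G B u ≤ closedDegIn G S u :=
  Set.ncard_le_ncard (Set.inter_subset_inter_right _ (coe_subset.2 h))
    (S.finite_toSet.inter_of_right _)

lemma closedDegIn_pos (G : SimpleGraph V) {B : Finset V} {u : V} (hu : u ∈ B) :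
    0 < closedDegIn G B u :=
  (Set.ncard_pos (B.finite_toSet.inter_of_right _)).2 ⟨u, Set.mem_insert u _, mem_coe.2 hu⟩

lemma closedDegIn_le_card (G : SimpleGraph V) (B : Finset V) (u : V) :
    closedDegIn G B u ≤ #B :=
  (Set.ncard_le_ncard Set.inter_subset_right B.finite_toSet).trans_eq (Set.ncard_coe_finset B)

lemma closedDegIn_le_deg [Finite V] (G : SimpleGraph V) {B : Finset V} {u v : V}
    (huv : G.Adj u v) (hv : v ∉ B) : closedDegIn G B u ≤ deg G u := by
  have hsub : insert u (G.neighborSet u) ∩ B ⊆ insert u (G.neighborSet u \ {v}) :=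
    fun x hx => hx.1.imp_right fun h => ⟨h, fun hxv => hv (hxv ▸ hx.2)⟩
  calc closedDegIn G B u ≤ (insert u (G.neighborSet u \ {v})).ncard := Set.ncard_le_ncard hsub
    _ ≤ (G.neighborSet u \ {v}).ncard + 1 := Set.ncard_insert_le _ _
    _ = deg G u := Set.ncard_sdiff_singleton_add_one huv

lemma deg_eq_card [Fintype V] (G : SimpleGraph V) (u : V) : deg G u = #(G.neighborFinset u) := by
  rw [deg, ← Set.ncard_coe_finset, SimpleGraph.coe_neighborFinset]

variable [DecidableEq V]

lemma closedDegIn_eq_card [Fintype V] (G : SimpleGraph V) (B : Finset V) (u : V) :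
    closedDegIn G B u = #(insert u (G.neighborFinset u) ∩ B) := by
  rw [closedDegIn, ← Set.ncard_coe_finset, coe_inter, coe_insert, SimpleGraph.coe_neighborFinset]

lemma card_inter_neighborFinset_le_closedDegIn [Fintype V] (G : SimpleGraph V) (B : Finset V)
    (u : V) : #(B ∩ G.neighborFinset u) ≤ closedDegIn G B u := by
  rw [closedDegIn_eq_card, inter_comm]
  exact card_le_card (inter_subset_inter_right (subset_insert u _))

lemma edgeForceProb_mem_Icc [Finite V] (G : SimpleGraph V) (B : Finset V) (u v : V) :
    edgeForceProb G B u v ∈ Set.Icc 0 1 := by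
  rw [edgeForceProb]
  split_ifs with h
  · exact ⟨by positivity,
      div_le_one_of_le₀ (by exact_mod_cast closedDegIn_le_deg G h.1 h.2.2) (by positivity)⟩
  · exact ⟨le_rfl, zero_le_one⟩

/-- The probability that `w` is blue one round after the blue set was `B`. -/
noncomputable def blueProb (G : SimpleGraph V) (B : Finset V) (w : V) : ℝ :=
  if w ∈ B then 1 else 1 - ∏ u ∈ B, (1 - edgeForceProb G B u w)

lemma blueProb_mem_Icc [Finite V] (G : SimpleGraph V) (B : Finset V) (w : V) :
    blueProb G B w ∈ Set.Icc 0 1 := by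
  rw [blueProb]
  split_ifs
  · exact ⟨zero_le_one, le_rfl⟩
  · exact ⟨sub_nonneg.2 (Finset.prod_le_one
        (fun u _ => sub_nonneg.2 (edgeForceProb_mem_Icc G B u w).2)
        fun u _ => sub_le_self 1 (edgeForceProb_mem_Icc G B u w).1),
      sub_le_self 1 (Finset.prod_nonneg
        fun u _ => sub_nonneg.2 (edgeForceProb_mem_Icc G B u w).2)⟩

lemma edgeForceProb_le_blueProb [Finite V] (G : SimpleGraph V) {B : Finset V} {u : V}
    (hu : u ∈ B) (w : V) : edgeForceProb G B u w ≤ blueProb G B w := by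
  have hprob (x : V) := edgeForceProb_mem_Icc G B x w
  rw [blueProb]
  split_ifs
  · exact (hprob u).2
  · have hrest : ∏ x ∈ B.erase u, (1 - edgeForceProb G B x w) ≤ 1 :=
      Finset.prod_le_one (fun x _ => sub_nonneg.2 (hprob x).2) fun x _ => sub_le_self 1 (hprob x).1
    rw [← Finset.mul_prod_erase _ _ hu, le_sub_comm]
    exact mul_le_of_le_one_right (sub_nonneg.2 (hprob u).2) hrest

variable [Fintype V]

lemma stepOfQ_edgeForceProb (G : SimpleGraph V) (B B' : Finset V) :
    stepOfQ (edgeForceProb G B) B B' = bernoulliWeight (blueProb G B) B' := by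
  rw [stepOfQ, bernoulliWeight]
  split_ifs with h
  · have hblue : ∏ v ∈ B, blueProb G B v = 1 := Finset.prod_eq_one fun v hv => if_pos hv
    rw [← Finset.prod_sdiff h, hblue, mul_one]
    congr 1 <;> refine Finset.prod_congr rfl fun v hv => ?_
    · rw [blueProb, if_neg (mem_sdiff.1 hv).2]
    · rw [blueProb, if_neg fun hB => mem_compl.1 hv (h hB), sub_sub_cancel]
  · obtain ⟨x, hxB, hxB'⟩ := not_subset.1 h
    rw [Finset.prod_eq_zero (mem_compl.2 hxB') (by rw [blueProb, if_pos hxB, sub_self]), mul_zero]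

/-- The transition operator of probabilistic zero forcing: `roundOp G φ B` is the expectation of
`φ` at the blue set one round after the blue set was `B`. -/
noncomputable def roundOp (G : SimpleGraph V) : Module.End ℝ (Finset V → ℝ) :=
  LinearMap.pi fun B => bernoulliExp (blueProb G B)

lemma roundOp_apply (G : SimpleGraph V) (φ : Finset V → ℝ) (B : Finset V) :
    roundOp G φ B = bernoulliExp (blueProb G B) φ := rfl

lemma roundOp_mono (G : SimpleGraph V) {B : Finset V} {φ ψ : Finset V → ℝ}
    (h : ∀ S, B ⊆ S → φ S ≤ ψ S) : roundOp G φ B ≤ roundOp G ψ B :=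
  bernoulliExp_mono_of_one_mem (blueProb_mem_Icc G B) fun S hS =>
    h S fun a ha => hS a (if_pos ha)

lemma roundOp_pow_mono (G : SimpleGraph V) (t : ℕ) {B : Finset V} {φ ψ : Finset V → ℝ}
    (h : ∀ S, B ⊆ S → φ S ≤ ψ S) : (roundOp G ^ t) φ B ≤ (roundOp G ^ t) ψ B := by
  induction t generalizing B with
  | zero => exact h B Subset.rfl
  | succ t ih =>
    rw [pow_succ']
    exact roundOp_mono G fun S hBS => ih fun S' hSS' => h S' (hBS.trans hSS')

lemma roundOp_pow_const (G : SimpleGraph V) (t : ℕ) (c : ℝ) :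
    (roundOp G ^ t) (fun _ => c) = fun _ => c := by
  induction t with
  | zero => rfl
  | succ t ih =>
    rw [pow_succ', Module.End.mul_apply, ih]
    exact funext fun B => bernoulliExp_const _ c

lemma roundOp_pow_le_of_le_mul (G : SimpleGraph V) {r : ℝ} (hr : 0 ≤ r) {φ : Finset V → ℝ}
    {B : Finset V} (h : ∀ S, B ⊆ S → roundOp G φ S ≤ r * φ S) (t : ℕ) :
    (roundOp G ^ t) φ B ≤ r ^ t * φ B := by
  induction t with
  | zero => simp
  | succ t ih =>
    calc (roundOp G ^ (t + 1)) φ B ≤ (roundOp G ^ t) (r • φ) B := by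
          rw [pow_succ]
          exact roundOp_pow_mono G t h
      _ = r * (roundOp G ^ t) φ B := by rw [map_smul, Pi.smul_apply, smul_eq_mul]
      _ ≤ r * (r ^ t * φ B) := mul_le_mul_of_nonneg_left ih hr
      _ = r ^ (t + 1) * φ B := by ring

/-- The probability that the blue set is outside the family `E` after `t` rounds started from
the blue set `B`. -/
noncomputable def missProb (G : SimpleGraph V) (t : ℕ) (E : Set (Finset V)) (B : Finset V) : ℝ :=
  (roundOp G ^ t) (Eᶜ.indicator 1) B

lemma missProb_one (G : SimpleGraph V) (E : Set (Finset V)) (B : Finset V) :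
    missProb G 1 E B = bernoulliProb (blueProb G B) Eᶜ := by
  rw [missProb, pow_one, roundOp_apply, bernoulliProb]

lemma missProb_nonneg (G : SimpleGraph V) (t : ℕ) (E : Set (Finset V)) (B : Finset V) :
    0 ≤ missProb G t E B := by
  have h := roundOp_pow_mono G t (B := B) (φ := fun _ => 0) (ψ := Eᶜ.indicator 1)
    fun S _ => Set.indicator_nonneg (fun _ _ => zero_le_one) S
  rwa [roundOp_pow_const] at h

lemma missProb_le_one (G : SimpleGraph V) (t : ℕ) (E : Set (Finset V)) (B : Finset V) :
    missProb G t E B ≤ 1 := by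
  have h := roundOp_pow_mono G t (B := B) (φ := Eᶜ.indicator 1) (ψ := fun _ => 1)
    fun S _ => Set.indicator_le_self' (fun _ _ => zero_le_one) S
  rwa [roundOp_pow_const] at h

lemma missProb_anti (G : SimpleGraph V) (t : ℕ) {E F : Set (Finset V)} (h : E ⊆ F)
    (B : Finset V) : missProb G t F B ≤ missProb G t E B :=
  roundOp_pow_mono G t fun S _ =>
    Set.indicator_le_indicator_of_subset (Set.compl_subset_compl.2 h) (fun _ => zero_le_one) S

lemma missProb_add_le (G : SimpleGraph V) (s t : ℕ) {E F : Set (Finset V)} (B : Finset V) {ε : ℝ}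
    (hε : 0 ≤ ε) (h : ∀ S ∈ E, missProb G t F S ≤ ε) :
    missProb G (s + t) F B ≤ missProb G s E B + ε := by
  calc missProb G (s + t) F B ≤ (roundOp G ^ s) (Eᶜ.indicator 1 + fun _ => ε) B := by
        rw [missProb, pow_add]
        change (roundOp G ^ s) (missProb G t F) B ≤ _
        refine roundOp_pow_mono G s fun S _ => ?_
        by_cases hS : S ∈ E
        · simpa [hS] using h S hS
        · simpa [hS] using (missProb_le_one G t F S).trans (le_add_of_nonneg_right hε)
    _ = missProb G s E B + ε := by
        rw [map_add, Pi.add_apply, roundOp_pow_const, missProb]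

lemma sum_seqProbAux_stdStep (G : SimpleGraph V) (φ : Finset V → ℝ) (ℓ : ℕ) (S : Finset V)
    (hist : List (Finset V)) (hS : hist.getLastD ∅ = S) :
    ∑ f : Fin ℓ → Finset V, φ ((S :: List.ofFn f).getLastD ∅) *
      seqProbAux (stdStep G) hist (List.ofFn f) = (roundOp G ^ ℓ) φ S := by
  induction ℓ generalizing hist S with
  | zero => simp [seqProbAux]
  | succ ℓ ih =>
    rw [pow_succ', Module.End.mul_apply, roundOp_apply, bernoulliExp_apply,
      ← (Fin.consEquiv fun _ => Finset V).sum_comp, Fintype.sum_prod_type]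
    refine Finset.sum_congr rfl fun B _ => ?_
    rw [← ih B (hist ++ [B]) (by simp), Finset.mul_sum]
    refine Finset.sum_congr rfl fun f _ => ?_
    have hcons : List.ofFn (Fin.consEquiv (fun _ => Finset V) (B, f)) = B :: List.ofFn f := by
      simp [Fin.consEquiv, List.ofFn_succ]
    rw [hcons, seqProbAux, stdStep, hS, stepOfQ_edgeForceProb]
    simp only [List.getLastD_cons]
    ring

lemma probAllBlue_eq_roundOp_pow (G : SimpleGraph V) (S : Finset V) (ℓ : ℕ) :
    probAllBlue G S ℓ = (roundOp G ^ ℓ) (({univ} : Set (Finset V)).indicator 1) S := by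
  rw [← sum_seqProbAux_stdStep G _ ℓ S [S] rfl]
  refine Finset.sum_congr rfl fun f _ => ?_
  simp [univ_subset_iff, Set.indicator_apply]

lemma one_sub_probAllBlue (G : SimpleGraph V) (S : Finset V) (ℓ : ℕ) :
    1 - probAllBlue G S ℓ = missProb G ℓ {univ} S := by
  have hcompl : ({univ} : Set (Finset V))ᶜ.indicator (1 : Finset V → ℝ) =
      (fun _ => 1) - Set.indicator {univ} 1 := Set.indicator_compl _ _
  rw [missProb, hcompl, map_sub, roundOp_pow_const, probAllBlue_eq_roundOp_pow, Pi.sub_apply]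

lemma probAllBlue_mem_Icc (G : SimpleGraph V) (S : Finset V) (ℓ : ℕ) :
    probAllBlue G S ℓ ∈ Set.Icc 0 1 := by
  have h := one_sub_probAllBlue G S ℓ
  exact ⟨by linarith [missProb_le_one G ℓ {univ} S], by linarith [missProb_nonneg G ℓ {univ} S]⟩

lemma monotone_probAllBlue (G : SimpleGraph V) (S : Finset V) : Monotone (probAllBlue G S) := by
  have stay : ∀ S' ∈ ({univ} : Set (Finset V)), missProb G 1 {univ} S' ≤ 0 := by
    rintro _ rfl
    calc missProb G 1 {univ} univ ≤ (roundOp G ^ 1) (fun _ => 0) univ :=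
          roundOp_pow_mono G 1 fun S' hS' => by simp [univ_subset_iff.1 hS']
      _ = 0 := by rw [roundOp_pow_const]
  refine monotone_nat_of_le_succ fun ℓ => ?_
  have h := missProb_add_le G ℓ 1 S le_rfl stay
  rw [← one_sub_probAllBlue, ← one_sub_probAllBlue] at h
  linarith

end Round

section Volume

variable {V : Type*} (G : SimpleGraph V) (B : Finset V)

/-- The total closed degree of the blue vertices into the blue set, which up to a constant factor
is the expected number of successful forces in one round. -/
noncomputable def blueVolume : ℝ := ∑ u ∈ B, (closedDegIn G B u : ℝ)

lemma card_le_blueVolume : #B ≤ blueVolume G B := by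
  rw [Finset.cast_card]
  exact Finset.sum_le_sum fun u hu => by exact_mod_cast closedDegIn_pos G hu

lemma blueVolume_le_card_sq : blueVolume G B ≤ (#B : ℝ) ^ 2 := by
  calc blueVolume G B ≤ ∑ _u ∈ B, (#B : ℝ) :=
        Finset.sum_le_sum fun u _ => by exact_mod_cast closedDegIn_le_card G B u
    _ = (#B : ℝ) ^ 2 := by rw [sum_const, nsmul_eq_mul, sq]

/-- The total closed degree of the blue set, truncated at the number of vertices; up to constant
factors it measures the expected number of vertices that are blue after the next round. -/
noncomputable def truncVolume [Fintype V] : ℝ :=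
  min (blueVolume G B) (Fintype.card V)

variable {G B} in
lemma one_le_truncVolume [Fintype V] (hB : B.Nonempty) : 1 ≤ truncVolume G B := by
  have hb : (1 : ℝ) ≤ #B := by exact_mod_cast hB.card_pos
  exact le_min (hb.trans (card_le_blueVolume G B))
    (hb.trans (by exact_mod_cast card_le_univ B))

/-- The truncated volume rescaled so that, up to the cap `c ^ 2 * |V| / 64`, one round at least
squares it with probability close to one. -/
noncomputable def scaledVolume [Fintype V] (c : ℝ) : ℝ :=
  c ^ 2 * truncVolume G B / 64

variable {G B}

lemma nonempty_of_scaledVolume_pos [Fintype V] {c : ℝ} (h : 0 < scaledVolume G B c) :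
    B.Nonempty := by
  rw [nonempty_iff_ne_empty]
  rintro rfl
  simp [scaledVolume, truncVolume, blueVolume] at h

lemma min_sq_le_scaledVolume [Fintype V] {S : Finset V} {c : ℝ}
    (h : (c * truncVolume G B / 8) ^ 2 ≤ blueVolume G S) :
    min (c ^ 2 * Fintype.card V / 64) (scaledVolume G B c ^ 2) ≤ scaledVolume G S c := by
  have hsq : scaledVolume G B c ^ 2 = c ^ 2 * (c * truncVolume G B / 8) ^ 2 / 64 := by
    rw [scaledVolume]
    ring
  rw [hsq, scaledVolume, truncVolume.eq_1 G S]
  rcases min_choice (blueVolume G S) (Fintype.card V : ℝ) with hmin | hmin <;> rw [hmin]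
  · exact (min_le_right _ _).trans (by gcongr)
  · exact min_le_left _ _

end Volume

section LowerBound

lemma one_sub_prod_one_sub_le_sum {ι : Type*} (s : Finset ι) {a : ι → ℝ}
    (ha : ∀ i, a i ∈ Set.Icc 0 1) : 1 - ∏ i ∈ s, (1 - a i) ≤ ∑ i ∈ s, a i := by
  induction s using Finset.induction_on with
  | empty => simp
  | insert i s hi ih =>
    rw [prod_insert hi, sum_insert hi]
    have hprod : ∏ i ∈ s, (1 - a i) ≤ 1 :=
      Finset.prod_le_one (fun j _ => sub_nonneg.2 (ha j).2) fun j _ => sub_le_self 1 (ha j).1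
    nlinarith [(ha i).1]

variable {V : Type*} [Fintype V] [DecidableEq V] (G : SimpleGraph V)

lemma sum_edgeForceProb_le (B : Finset V) (u : V) :
    ∑ w, edgeForceProb G B u w ≤ closedDegIn G B u := by
  calc ∑ w, edgeForceProb G B u w
      ≤ ∑ w, if w ∈ G.neighborFinset u then (closedDegIn G B u : ℝ) / deg G u else 0 := by
        refine Finset.sum_le_sum fun w _ => ?_
        rw [edgeForceProb]
        split_ifs with hforce hadj hadj
        · exact le_rfl
        · exact absurd ((G.mem_neighborFinset u w).2 hforce.1) hadj
        · positivity
        · exact le_rfl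
    _ = deg G u * (closedDegIn G B u / deg G u) := by
        rw [Finset.sum_ite_mem, univ_inter, sum_const, nsmul_eq_mul, deg_eq_card]
    _ ≤ closedDegIn G B u := by
        rw [← mul_div_assoc]
        exact div_le_of_le_mul₀ (by positivity) (by positivity) (mul_comm _ _).le

lemma sum_blueProb_le (B : Finset V) : ∑ w, blueProb G B w ≤ #B + blueVolume G B := by
  calc ∑ w, blueProb G B w
      ≤ ∑ w, ((if w ∈ B then (1 : ℝ) else 0) + ∑ u ∈ B, edgeForceProb G B u w) := by
        refine Finset.sum_le_sum fun w _ => ?_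
        rw [blueProb]
        split_ifs
        · exact le_add_of_nonneg_right
            (Finset.sum_nonneg fun u _ => (edgeForceProb_mem_Icc G B u w).1)
        · rw [zero_add]
          exact one_sub_prod_one_sub_le_sum B fun u => edgeForceProb_mem_Icc G B u w
    _ = #B + ∑ u ∈ B, ∑ w, edgeForceProb G B u w := by
        rw [Finset.sum_add_distrib, Finset.sum_comm, Finset.sum_boole, Finset.filter_univ_mem]
    _ ≤ #B + blueVolume G B := by
        gcongr
        exact Finset.sum_le_sum fun u _ => sum_edgeForceProb_le G B u

/-- The tangent to the logarithm at `2 * #B ^ 2`, an upper bound for the expected number of blue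
vertices after the round. -/
lemma roundOp_log_card_le {B : Finset V} (hB : B.Nonempty) :
    roundOp G (fun S => log (2 * #S)) B ≤ 2 * log (2 * #B) := by
  have hb : (1 : ℝ) ≤ #B := by exact_mod_cast hB.card_pos
  set a : ℝ := 2 * (#B : ℝ) ^ 2 with ha
  have ha₀ : 0 < a := by positivity
  have hlog : log (2 * a) = 2 * log (2 * #B) := by
    rw [show 2 * a = (2 * #B : ℝ) ^ 2 by rw [ha]; ring, Real.log_pow, Nat.cast_ofNat]
  have hmean : a⁻¹ * ∑ w, blueProb G B w ≤ 1 := by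
    rw [inv_mul_le_iff₀ ha₀]
    nlinarith [sum_blueProb_le G B, blueVolume_le_card_sq G B]
  calc roundOp G (fun S => log (2 * #S)) B
      ≤ roundOp G (a⁻¹ • (fun S : Finset V => (#S : ℝ)) + fun _ => log (2 * a) - 1) B := by
        refine roundOp_mono G fun S hBS => ?_
        have hs : (0 : ℝ) < #S := by exact_mod_cast (hB.mono hBS).card_pos
        have htangent := Real.log_le_sub_one_of_pos (div_pos hs ha₀)
        rw [Real.log_div hs.ne' ha₀.ne', div_eq_inv_mul] at htangent
        simp only [Pi.add_apply, Pi.smul_apply, smul_eq_mul]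
        rw [Real.log_mul two_ne_zero hs.ne', Real.log_mul two_ne_zero ha₀.ne']
        linarith
    _ = a⁻¹ * ∑ w, blueProb G B w + (log (2 * a) - 1) := by
        rw [roundOp_apply, map_add, map_smul, bernoulliExp_card, bernoulliExp_const, smul_eq_mul]
    _ ≤ 2 * log (2 * #B) := by linarith

lemma probAllBlue_singleton_le (v : V) (ℓ : ℕ) (hV : 2 ≤ Fintype.card V) :
    probAllBlue G {v} ℓ ≤ 2 ^ ℓ / logb 2 (Fintype.card V) := by
  have hlogV : 0 < log (Fintype.card V) := Real.log_pos (by exact_mod_cast hV)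
  have hmarkov : log (Fintype.card V) * probAllBlue G {v} ℓ ≤ 2 ^ ℓ * log 2 := by
    calc log (Fintype.card V) * probAllBlue G {v} ℓ
        = (roundOp G ^ ℓ) (log (Fintype.card V) • Set.indicator {univ} 1) {v} := by
          rw [map_smul, Pi.smul_apply, smul_eq_mul, probAllBlue_eq_roundOp_pow]
      _ ≤ (roundOp G ^ ℓ) (fun S => log (2 * #S)) {v} := by
          refine roundOp_pow_mono G ℓ fun S hS => ?_
          have hs : (1 : ℝ) ≤ #S := by exact_mod_cast card_pos.2 ((singleton_nonempty v).mono hS)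
          rw [Pi.smul_apply, smul_eq_mul, Set.indicator_apply]
          split_ifs with h
          · rw [h, card_univ, Pi.one_apply, mul_one]
            exact Real.log_le_log (by positivity) (by linarith [Nat.cast_nonneg (α := ℝ) #S])
          · rw [mul_zero]
            exact Real.log_nonneg (by linarith)
      _ ≤ 2 ^ ℓ * log (2 * #{v}) :=
          roundOp_pow_le_of_le_mul G zero_le_two
            (fun S hS => roundOp_log_card_le G ((singleton_nonempty v).mono hS)) ℓ
      _ = 2 ^ ℓ * log 2 := by simp
  rw [Real.logb, div_div_eq_mul_div, le_div_iff₀ hlogV]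
  linarith

end LowerBound

section BlueProbLowerBound

variable {V : Type*} [Fintype V] [DecidableEq V] {G : SimpleGraph V}

lemma one_sub_blueProb_le_exp {B : Finset V} {w : V} (hw : w ∉ B) :
    1 - blueProb G B w ≤
      exp (-((∑ u ∈ B ∩ G.neighborFinset w, (closedDegIn G B u : ℝ)) / Fintype.card V)) := by
  have hforce : (∑ u ∈ B ∩ G.neighborFinset w, (closedDegIn G B u : ℝ)) / Fintype.card V ≤
      ∑ u ∈ B, edgeForceProb G B u w := by
    rw [Finset.sum_div]
    refine (Finset.sum_le_sum fun u hu => ?_).trans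
      (Finset.sum_le_sum_of_subset_of_nonneg inter_subset_left
        fun u _ _ => (edgeForceProb_mem_Icc G B u w).1)
    rw [mem_inter, SimpleGraph.mem_neighborFinset] at hu
    rw [edgeForceProb, if_pos ⟨hu.2.symm, hu.1, hw⟩, deg_eq_card]
    have hdeg : 0 < #(G.neighborFinset u) :=
      card_pos.2 ⟨w, (G.mem_neighborFinset u w).2 hu.2.symm⟩
    gcongr
    exact card_le_univ _
  rw [blueProb, if_neg hw, sub_sub_cancel]
  calc ∏ u ∈ B, (1 - edgeForceProb G B u w) ≤ ∏ u ∈ B, exp (-edgeForceProb G B u w) :=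
        Finset.prod_le_prod (fun u _ => sub_nonneg.2 (edgeForceProb_mem_Icc G B u w).2)
          fun u _ => one_sub_le_exp_neg _
    _ = exp (-∑ u ∈ B, edgeForceProb G B u w) := by
        rw [← Finset.sum_neg_distrib, Real.exp_sum]
    _ ≤ _ := Real.exp_le_exp.2 (neg_le_neg hforce)

lemma exp_neg_le_one_sub_half {s : ℝ} (hs : s ∈ Set.Icc 0 1) : exp (-s) ≤ 1 - s / 2 := by
  rw [Real.exp_neg, inv_le_iff_one_le_mul₀ (exp_pos s)]
  nlinarith [Real.add_one_le_exp s, hs.1, hs.2]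

lemma mul_sum_closedDegIn_le_blueProb (B : Finset V) (w : V) {θ : ℝ} (hθ : θ ∈ Set.Icc 0 1)
    (hvol : θ * blueVolume G B ≤ Fintype.card V) :
    θ / (2 * Fintype.card V) * ∑ u ∈ B ∩ G.neighborFinset w, (closedDegIn G B u : ℝ) ≤
      blueProb G B w := by
  have hn : (0 : ℝ) < Fintype.card V := by exact_mod_cast Fintype.card_pos_iff.2 ⟨w⟩
  set X : ℝ := ∑ u ∈ B ∩ G.neighborFinset w, (closedDegIn G B u : ℝ)
  have hX₀ : 0 ≤ X / Fintype.card V := by positivity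
  have hXvol : X ≤ blueVolume G B :=
    Finset.sum_le_sum_of_subset_of_nonneg inter_subset_left fun u _ _ => by positivity
  have hrate : θ * (X / Fintype.card V) ∈ Set.Icc 0 1 := by
    refine ⟨mul_nonneg hθ.1 hX₀, ?_⟩
    rw [← mul_div_assoc, div_le_one hn]
    exact (mul_le_mul_of_nonneg_left hXvol hθ.1).trans hvol
  have hhalf : θ / (2 * Fintype.card V) * X = θ * (X / Fintype.card V) / 2 := by ring
  rw [hhalf]
  by_cases hw : w ∈ B
  · rw [blueProb, if_pos hw]
    linarith [hrate.2]
  · have hslow : exp (-(X / Fintype.card V)) ≤ exp (-(θ * (X / Fintype.card V))) :=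
      Real.exp_le_exp.2 (neg_le_neg (mul_le_of_le_one_left hX₀ hθ.2))
    linarith [one_sub_blueProb_le_exp (G := G) hw, exp_neg_le_one_sub_half hrate]

lemma sum_neighborFinset_sum_closedDegIn (B : Finset V) (x : V) :
    ∑ w ∈ G.neighborFinset x, ∑ u ∈ B ∩ G.neighborFinset w, (closedDegIn G B u : ℝ) =
      ∑ u ∈ B, #(G.neighborFinset u ∩ G.neighborFinset x) * (closedDegIn G B u : ℝ) := by
  rw [Finset.sum_comm' (s' := fun u => G.neighborFinset u ∩ G.neighborFinset x) (t' := B)]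
  · simp only [sum_const, nsmul_eq_mul]
  · intro w u
    simp only [mem_inter, SimpleGraph.mem_neighborFinset, G.adj_comm u w]
    tauto

end BlueProbLowerBound

section MinCodegree

variable {V : Type*} [Fintype V] [DecidableEq V]

/-- Every two vertices have at least `c * |V|` common neighbours. The case of equal vertices is
included, so all degrees are at least `c * |V|` as well. -/
def MinCodegree (G : SimpleGraph V) (c : ℝ) : Prop :=
  ∀ u x, c * Fintype.card V ≤ #(G.neighborFinset u ∩ G.neighborFinset x)

variable {G : SimpleGraph V} {c : ℝ} {B : Finset V}

lemma sum_blueProb_le_truncVolume (G : SimpleGraph V) (B : Finset V) :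
    ∑ x, blueProb G B x ≤ 2 * truncVolume G B := by
  have hcard : ∑ x, blueProb G B x ≤ Fintype.card V := by
    simpa using Finset.sum_le_sum fun x (_ : x ∈ univ) => (blueProb_mem_Icc G B x).2
  rw [truncVolume, mul_min_of_nonneg _ _ zero_le_two]
  exact le_min (by linarith [sum_blueProb_le G B, card_le_blueVolume G B])
    (hcard.trans (by linarith [Nat.cast_nonneg (α := ℝ) (Fintype.card V)]))

/-- Damping every force by `truncVolume / blueVolume ≤ 1` keeps all forcing rates below `1`, where
`1 - exp (-s)` is at least `s / 2`. -/
lemma MinCodegree.le_sum_blueProb (hG : MinCodegree G c) (hB : B.Nonempty) (x : V) :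
    c * truncVolume G B / 2 ≤ ∑ w ∈ G.neighborFinset x, blueProb G B w := by
  have hn : (0 : ℝ) < Fintype.card V := by exact_mod_cast Fintype.card_pos_iff.2 ⟨x⟩
  have hvol : 0 < blueVolume G B :=
    zero_lt_one.trans_le ((one_le_truncVolume hB).trans (min_le_left _ _))
  set θ := truncVolume G B / blueVolume G B
  have hθ_mem : θ ∈ Set.Icc 0 1 :=
    ⟨div_nonneg (zero_le_one.trans (one_le_truncVolume hB)) hvol.le,
      (div_le_one hvol).2 (min_le_left _ _)⟩
  have hθ_mul : θ * blueVolume G B = truncVolume G B := div_mul_cancel₀ _ hvol.ne'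
  have hcodeg : c * Fintype.card V * blueVolume G B ≤
      ∑ u ∈ B, #(G.neighborFinset u ∩ G.neighborFinset x) * (closedDegIn G B u : ℝ) := by
    rw [blueVolume, Finset.mul_sum]
    exact Finset.sum_le_sum fun u _ => mul_le_mul_of_nonneg_right (hG u x) (by positivity)
  calc c * truncVolume G B / 2
      = θ / (2 * Fintype.card V) * (c * Fintype.card V * blueVolume G B) := by
        rw [← hθ_mul]
        field_simp
    _ ≤ θ / (2 * Fintype.card V) *
          ∑ u ∈ B, #(G.neighborFinset u ∩ G.neighborFinset x) * (closedDegIn G B u : ℝ) :=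
        mul_le_mul_of_nonneg_left hcodeg (div_nonneg hθ_mem.1 (by positivity))
    _ = ∑ w ∈ G.neighborFinset x, θ / (2 * Fintype.card V) *
          ∑ u ∈ B ∩ G.neighborFinset w, (closedDegIn G B u : ℝ) := by
        rw [← sum_neighborFinset_sum_closedDegIn, Finset.mul_sum]
    _ ≤ ∑ w ∈ G.neighborFinset x, blueProb G B w := Finset.sum_le_sum fun w _ =>
        mul_sum_closedDegIn_le_blueProb B w hθ_mem (hθ_mul.trans_le (min_le_right _ _))

lemma sq_le_blueVolume {S : Finset V} {a : ℝ} (ha : 0 ≤ a) {x₀ : V}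
    (hx₀ : a ≤ #(S ∩ G.neighborFinset x₀)) (h : ∀ x ∈ S, a ≤ #(S ∩ G.neighborFinset x)) :
    a ^ 2 ≤ blueVolume G S := by
  have hcard : a ≤ #S := hx₀.trans (by exact_mod_cast card_le_card inter_subset_left)
  calc a ^ 2 ≤ #S * a := by
        rw [sq]
        exact mul_le_mul_of_nonneg_right hcard ha
    _ = ∑ _x ∈ S, a := by rw [sum_const, nsmul_eq_mul]
    _ ≤ blueVolume G S := Finset.sum_le_sum fun x hx =>
        (h x hx).trans (by exact_mod_cast card_inter_neighborFinset_le_closedDegIn G S x)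

lemma MinCodegree.bernoulliProb_few_blue_neighbors_le (hG : MinCodegree G c)
    (hB : B.Nonempty) (x₀ : V) :
    bernoulliProb (blueProb G B) {S | #(S ∩ G.neighborFinset x₀) < c * truncVolume G B / 8 ∨
        ∃ x ∈ S, #(S ∩ G.neighborFinset x) < c * truncVolume G B / 8} ≤
      3 * truncVolume G B * exp (-(3 / 8) * (c * truncVolume G B / 2)) := by
  set m := c * truncVolume G B / 2 with hm
  have hmean (x : V) := hG.le_sum_blueProb hB x
  have hq := blueProb_mem_Icc G B
  have hblue (x : V) : bernoulliProb (blueProb G B)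
      {S | x ∈ S ∧ #(S ∩ G.neighborFinset x) < m / 4} ≤ blueProb G B x * exp (-(3 / 8) * m) := by
    have hdisj : Disjoint {x} (G.neighborFinset x) := by simp
    simpa using bernoulliProb_superset_and_card_inter_lt_le hq hdisj (hmean x)
  have hunion : {S | ∃ x ∈ S, #(S ∩ G.neighborFinset x) < m / 4} ⊆
      ⋃ x ∈ (univ : Finset V), {S | x ∈ S ∧ #(S ∩ G.neighborFinset x) < m / 4} := by
    simp [Set.subset_def]
  have hquarter : c * truncVolume G B / 8 = m / 4 := by rw [hm]; ring
  rw [hquarter]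
  calc bernoulliProb (blueProb G B) ({S | #(S ∩ G.neighborFinset x₀) < m / 4} ∪
        {S | ∃ x ∈ S, #(S ∩ G.neighborFinset x) < m / 4})
      ≤ exp (-(3 / 8) * m) + ∑ x, blueProb G B x * exp (-(3 / 8) * m) :=
        (bernoulliProb_union_le hq _ _).trans (add_le_add
          (bernoulliProb_card_inter_lt_le hq _ (hmean x₀))
          ((bernoulliProb_le_sum hq univ hunion).trans (Finset.sum_le_sum fun x _ => hblue x)))
    _ = (1 + ∑ x, blueProb G B x) * exp (-(3 / 8) * m) := by rw [← Finset.sum_mul]; ring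
    _ ≤ 3 * truncVolume G B * exp (-(3 / 8) * m) := by
        gcongr
        linarith [sum_blueProb_le_truncVolume G B, one_le_truncVolume (G := G) hB]

namespace MinCodegree

variable (hG : MinCodegree G c)
include hG

lemma missProb_one_le (hc : 0 < c) (hB : B.Nonempty) :
    missProb G 1 {S | min (c ^ 2 * Fintype.card V / 64) (scaledVolume G B c ^ 2) ≤
      scaledVolume G S c} B ≤ 6 / scaledVolume G B c := by
  obtain ⟨x₀, _⟩ := id hB
  set P := truncVolume G B with hP
  have hP_pos : 0 < P := zero_lt_one.trans_le (one_le_truncVolume hB)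
  have hbad : {S | min (c ^ 2 * Fintype.card V / 64) (scaledVolume G B c ^ 2) ≤
      scaledVolume G S c}ᶜ ⊆ {S | #(S ∩ G.neighborFinset x₀) < c * P / 8 ∨
        ∃ x ∈ S, #(S ∩ G.neighborFinset x) < c * P / 8} := by
    refine Set.compl_subset_comm.1 fun S hS => ?_
    simp only [Set.mem_compl_iff, Set.mem_ofPred_eq, not_or, not_exists, not_and, not_lt] at hS
    exact min_sq_le_scaledVolume (sq_le_blueVolume (by positivity) hS.1 hS.2)
  have hexp : exp (-(3 / 8) * (c * P / 2)) ≤ 2 / (c * P / 8) ^ 2 := by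
    calc exp (-(3 / 8) * (c * P / 2)) ≤ (exp (c * P / 8))⁻¹ := by
          rw [← Real.exp_neg]
          exact Real.exp_le_exp.2 (by nlinarith [mul_pos hc hP_pos])
      _ ≤ ((c * P / 8) ^ 2 / 2)⁻¹ := by
          gcongr
          linarith [Real.quadratic_le_exp_of_nonneg (x := c * P / 8) (by positivity),
            mul_pos hc hP_pos]
      _ = 2 / (c * P / 8) ^ 2 := inv_div _ _
  calc missProb G 1 _ B ≤ 3 * P * exp (-(3 / 8) * (c * P / 2)) :=
        (missProb_one G _ B).trans_le ((bernoulliProb_mono (blueProb_mem_Icc G B) hbad).trans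
          (hG.bernoulliProb_few_blue_neighbors_le hB x₀))
    _ ≤ 3 * P * (2 / (c * P / 8) ^ 2) := by gcongr
    _ = 6 / scaledVolume G B c := by
        rw [scaledVolume, ← hP]
        field_simp
        ring

lemma missProb_squaring_le (hc : 0 < c) {y : ℝ} (hy : 1 ≤ y)
    (hyn : y ≤ c ^ 2 * Fintype.card V / 64) (hyB : y ≤ scaledVolume G B c) (t : ℕ) :
    missProb G t {S | min (c ^ 2 * Fintype.card V / 64) (y ^ 2 ^ t) ≤ scaledVolume G S c} B ≤
      6 * t / y := by
  set N := c ^ 2 * Fintype.card V / 64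
  induction t with
  | zero => simp [missProb, hyB]
  | succ t ih =>
    have hround : ∀ S ∈ {S | min N (y ^ 2 ^ t) ≤ scaledVolume G S c},
        missProb G 1 {T | min N (y ^ 2 ^ (t + 1)) ≤ scaledVolume G T c} S ≤ 6 / y := by
      intro S (hS : min N (y ^ 2 ^ t) ≤ scaledVolume G S c)
      have hyS : y ≤ scaledVolume G S c :=
        (le_min hyn (le_self_pow₀ hy (by positivity))).trans hS
      have hsq : min N (y ^ 2 ^ (t + 1)) ≤ min N (scaledVolume G S c ^ 2) := by
        refine le_min (min_le_left _ _) ?_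
        rcases min_le_iff.1 hS with hN | hpow
        · exact (min_le_left _ _).trans
            (hN.trans (le_self_pow₀ (hy.trans hyS) two_ne_zero))
        · rw [pow_succ, pow_mul]
          exact (min_le_right _ _).trans (by gcongr)
      have hS_ne : S.Nonempty := nonempty_of_scaledVolume_pos (by linarith)
      calc missProb G 1 {T | min N (y ^ 2 ^ (t + 1)) ≤ scaledVolume G T c} S
          ≤ 6 / scaledVolume G S c :=
            (missProb_anti G 1 (fun T hT => hsq.trans hT) S).trans (hG.missProb_one_le hc hS_ne)
        _ ≤ 6 / y := by gcongr
    calc missProb G (t + 1) _ B ≤ 6 * t / y + 6 / y :=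
          (missProb_add_le G t 1 B (by positivity) hround).trans (add_le_add_left ih _)
      _ = 6 * (t + 1 : ℕ) / y := by push_cast; ring

lemma missProb_one_many_blue_neighbors_le (hc : 0 ≤ c) (hB : B.Nonempty)
    (hvol : Fintype.card V ≤ blueVolume G B) :
    missProb G 1 {S | ∀ x, c * Fintype.card V / 8 ≤ #(S ∩ G.neighborFinset x)} B ≤
      Fintype.card V * exp (-(c * Fintype.card V / 8)) := by
  have hmean (x : V) := hG.le_sum_blueProb hB x
  rw [truncVolume, min_eq_right hvol] at hmean
  have hunion : {S | ∀ x, c * Fintype.card V / 8 ≤ #(S ∩ G.neighborFinset x)}ᶜ ⊆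
      ⋃ x ∈ (univ : Finset V), {S | #(S ∩ G.neighborFinset x) < c * Fintype.card V / 2 / 4} := by
    intro S hS
    obtain ⟨x, hx⟩ : ∃ x, #(S ∩ G.neighborFinset x) < c * Fintype.card V / 8 := by
      simpa using hS
    exact Set.mem_biUnion (mem_univ x) (hx.trans_eq (by ring))
  calc missProb G 1 _ B ≤ ∑ _x : V, exp (-(3 / 8) * (c * Fintype.card V / 2)) :=
        (missProb_one G _ B).trans_le ((bernoulliProb_le_sum (blueProb_mem_Icc G B) univ
          hunion).trans (Finset.sum_le_sum fun x _ =>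
            bernoulliProb_card_inter_lt_le (blueProb_mem_Icc G B) _ (hmean x)))
    _ = Fintype.card V * exp (-(3 / 8) * (c * Fintype.card V / 2)) := by
        rw [sum_const, card_univ, nsmul_eq_mul]
    _ ≤ Fintype.card V * exp (-(c * Fintype.card V / 8)) := by
        gcongr
        nlinarith [mul_nonneg hc (Nat.cast_nonneg (α := ℝ) (Fintype.card V))]

end MinCodegree

lemma missProb_one_univ_le {a : ℝ} (ha : 0 ≤ a) (h : ∀ x, a ≤ #(B ∩ G.neighborFinset x)) :
    missProb G 1 {univ} B ≤ Fintype.card V * exp (-(a ^ 2 / Fintype.card V)) := by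
  have hunion : ({univ} : Set (Finset V))ᶜ ⊆ ⋃ w ∈ (univ : Finset V), {T | w ∉ T} := by
    intro T hT
    simpa [eq_univ_iff_forall] using hT
  have hwhite (w : V) : 1 - blueProb G B w ≤ exp (-(a ^ 2 / Fintype.card V)) := by
    by_cases hw : w ∈ B
    · rw [blueProb, if_pos hw, sub_self]
      exact (exp_pos _).le
    · refine (one_sub_blueProb_le_exp hw).trans (Real.exp_le_exp.2 (neg_le_neg ?_))
      gcongr
      calc a ^ 2 ≤ #(B ∩ G.neighborFinset w) * a := by
            rw [sq]
            exact mul_le_mul_of_nonneg_right (h w) ha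
        _ = ∑ _u ∈ B ∩ G.neighborFinset w, a := by rw [sum_const, nsmul_eq_mul]
        _ ≤ ∑ u ∈ B ∩ G.neighborFinset w, (closedDegIn G B u : ℝ) :=
          Finset.sum_le_sum fun u _ => (h u).trans
            (by exact_mod_cast card_inter_neighborFinset_le_closedDegIn G B u)
  calc missProb G 1 {univ} B ≤ ∑ w, (1 - blueProb G B w) := by
        simpa only [missProb_one, bernoulliProb_notMem] using
          bernoulliProb_le_sum (blueProb_mem_Icc G B) univ hunion
    _ ≤ ∑ _w : V, exp (-(a ^ 2 / Fintype.card V)) := Finset.sum_le_sum fun w _ => hwhite w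
    _ = Fintype.card V * exp (-(a ^ 2 / Fintype.card V)) := by
        rw [sum_const, card_univ, nsmul_eq_mul]

end MinCodegree

section BurnIn

variable {V : Type*}

/-- The reciprocal of the closed degree of `v` into the blue set, set to `0` once that degree has
reached `K`. It contracts in expectation each round, which bounds the time needed to reach `K`. -/
noncomputable def burnInPotential (G : SimpleGraph V) (v : V) (K : ℝ) (B : Finset V) : ℝ :=
  if K ≤ closedDegIn G B v then 0 else (closedDegIn G B v : ℝ)⁻¹

lemma burnInPotential_le_inv (G : SimpleGraph V) (v : V) (K : ℝ) (B : Finset V) :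
    burnInPotential G v K B ≤ (closedDegIn G B v : ℝ)⁻¹ := by
  rw [burnInPotential]
  split_ifs
  · positivity
  · exact le_rfl

lemma burnInPotential_le_mul_add_indicator {G : SimpleGraph V} {B S : Finset V} {v : V}
    (hv : v ∈ B) (h : B ⊆ S) (K : ℝ) :
    burnInPotential G v K S ≤ (closedDegIn G B v : ℝ)⁻¹ * (8 / 9 + 1 / 9 *
      {T | 9 / 8 * (closedDegIn G B v : ℝ) ≤ closedDegIn G T v}ᶜ.indicator 1 S) := by
  have hpos : (0 : ℝ) < closedDegIn G B v := by exact_mod_cast closedDegIn_pos G hv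
  refine (burnInPotential_le_inv G v K S).trans ?_
  by_cases hS : 9 / 8 * (closedDegIn G B v : ℝ) ≤ closedDegIn G S v
  · calc (closedDegIn G S v : ℝ)⁻¹ ≤ (9 / 8 * (closedDegIn G B v : ℝ))⁻¹ :=
          inv_anti₀ (by positivity) hS
      _ = _ := by simp [hS, mul_comm]
  · calc (closedDegIn G S v : ℝ)⁻¹ ≤ (closedDegIn G B v : ℝ)⁻¹ :=
          inv_anti₀ hpos (by exact_mod_cast closedDegIn_mono G h v)
      _ = (closedDegIn G B v : ℝ)⁻¹ * (8 / 9 + 1 / 9) := by norm_num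
      _ = _ := by simp [hS]

variable [Fintype V] [DecidableEq V] {G : SimpleGraph V} {B : Finset V} {v : V}

lemma closedDegIn_add_card_neighborFinset_sdiff (hv : v ∈ B) :
    closedDegIn G B v + #(G.neighborFinset v \ B) = deg G v + 1 := by
  rw [closedDegIn_eq_card, insert_inter_of_mem hv, card_insert_of_notMem (by simp),
    add_right_comm, card_inter_add_card_sdiff, deg_eq_card]

lemma closedDegIn_add_card_inter_sdiff_le {S : Finset V} (h : B ⊆ S) (v : V) :
    closedDegIn G B v + #(S ∩ (G.neighborFinset v \ B)) ≤ closedDegIn G S v := by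
  have hdisj : Disjoint (insert v (G.neighborFinset v) ∩ B) (S ∩ (G.neighborFinset v \ B)) :=
    disjoint_sdiff.mono inter_subset_right inter_subset_right
  rw [closedDegIn_eq_card, closedDegIn_eq_card, ← card_union_of_disjoint hdisj]
  refine card_le_card (union_subset (inter_subset_inter_left h) fun x hx => ?_)
  rw [mem_inter, Finset.mem_sdiff] at hx
  exact mem_inter.2 ⟨mem_insert_of_mem hx.2.1, hx.1⟩

lemma half_closedDegIn_le_sum_blueProb (hv : v ∈ B) (h : 2 * closedDegIn G B v ≤ deg G v) :
    (closedDegIn G B v : ℝ) / 2 ≤ ∑ w ∈ G.neighborFinset v \ B, blueProb G B w := by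
  have hdeg : (0 : ℝ) < deg G v := by
    have := closedDegIn_pos G hv
    exact_mod_cast (show 0 < deg G v by lia)
  have hwhite : (deg G v : ℝ) ≤ 2 * #(G.neighborFinset v \ B) := by
    have := closedDegIn_add_card_neighborFinset_sdiff (G := G) hv
    exact_mod_cast (show deg G v ≤ 2 * #(G.neighborFinset v \ B) by lia)
  calc (closedDegIn G B v : ℝ) / 2
      ≤ #(G.neighborFinset v \ B) * (closedDegIn G B v / deg G v) := by
        rw [mul_div_assoc', div_le_div_iff₀ two_pos hdeg]
        nlinarith [Nat.cast_nonneg (α := ℝ) (closedDegIn G B v)]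
    _ = ∑ w ∈ G.neighborFinset v \ B, edgeForceProb G B v w := by
        rw [← nsmul_eq_mul, ← sum_const]
        refine Finset.sum_congr rfl fun w hw => ?_
        rw [Finset.mem_sdiff, SimpleGraph.mem_neighborFinset] at hw
        rw [edgeForceProb, if_pos ⟨hw.1, hv, hw.2⟩]
    _ ≤ _ := Finset.sum_le_sum fun w _ => edgeForceProb_le_blueProb G hv w

lemma missProb_one_closedDegIn_growth_le (hv : v ∈ B) (h : 2 * closedDegIn G B v ≤ deg G v) :
    missProb G 1 {S | 9 / 8 * (closedDegIn G B v : ℝ) ≤ closedDegIn G S v} B ≤ 16 / 19 := by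
  have hk_one : (1 : ℝ) ≤ closedDegIn G B v := by exact_mod_cast closedDegIn_pos G hv
  set A := G.neighborFinset v \ B
  have hgrowth (S : Finset V) (hBS : B ⊆ S) :
      closedDegIn G B v + #(S ∩ A) ≤ (closedDegIn G S v : ℝ) := by
    exact_mod_cast closedDegIn_add_card_inter_sdiff_le hBS v
  set k : ℝ := (closedDegIn G B v : ℝ)
  calc missProb G 1 _ B ≤ missProb G 1 {S | #(S ∩ A) < k / 2 / 4}ᶜ B := by
        refine roundOp_pow_mono G 1 fun S hBS => ?_
        by_cases hS : 9 / 8 * k ≤ closedDegIn G S v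
        · rw [Set.indicator_of_notMem (by simpa using hS)]
          exact Set.indicator_nonneg (fun _ _ => zero_le_one) S
        · have hfew : #(S ∩ A) < k / 2 / 4 := by linarith [hgrowth S hBS]
          simp [hS, hfew]
    _ ≤ exp (-(3 / 8) * (k / 2)) := by
        rw [missProb_one, compl_compl]
        exact bernoulliProb_card_inter_lt_le (blueProb_mem_Icc G B) A
          (half_closedDegIn_le_sum_blueProb hv h)
    _ ≤ exp (-(3 / 16)) := Real.exp_le_exp.2 (by linarith)
    _ ≤ 16 / 19 := by
        rw [Real.exp_neg, inv_le_comm₀ (exp_pos _) (by norm_num)]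
        linarith [Real.add_one_le_exp (3 / 16 : ℝ)]

lemma roundOp_burnInPotential_le {K : ℝ} (hK : 2 * K ≤ deg G v) (hv : v ∈ B) :
    roundOp G (burnInPotential G v K) B ≤ 56 / 57 * burnInPotential G v K B := by
  rw [burnInPotential.eq_1 G v K B]
  split_ifs with hreach
  · calc roundOp G (burnInPotential G v K) B ≤ roundOp G (fun _ => 0) B :=
          roundOp_mono G fun S hBS => (if_pos (hreach.trans
            (by exact_mod_cast closedDegIn_mono G hBS v))).le
      _ = 56 / 57 * 0 := by rw [roundOp_apply, bernoulliExp_const, mul_zero]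
  · have hdeg : 2 * closedDegIn G B v ≤ deg G v := by
      exact_mod_cast (by linarith : (2 : ℝ) * closedDegIn G B v ≤ deg G v)
    set k : ℝ := (closedDegIn G B v : ℝ)
    set E : Set (Finset V) := {S | 9 / 8 * k ≤ closedDegIn G S v}
    calc roundOp G (burnInPotential G v K) B
        ≤ roundOp G (k⁻¹ • ((fun _ => 8 / 9) + (1 / 9 : ℝ) • Eᶜ.indicator 1)) B :=
          roundOp_mono G fun S hBS => burnInPotential_le_mul_add_indicator hv hBS K
      _ = k⁻¹ * (8 / 9 + 1 / 9 * missProb G 1 E B) := by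
          rw [map_smul, map_add, map_smul, missProb, pow_one]
          simp only [Pi.smul_apply, Pi.add_apply, smul_eq_mul]
          rw [roundOp_apply G (fun _ => 8 / 9), bernoulliExp_const]
      _ ≤ k⁻¹ * (56 / 57) := by
          gcongr
          linarith [missProb_one_closedDegIn_growth_le hv hdeg]
      _ = 56 / 57 * k⁻¹ := mul_comm _ _

lemma missProb_blueVolume_le {K : ℝ} (hK₀ : 0 ≤ K) (hK : 2 * K ≤ deg G v) (t : ℕ) :
    missProb G t {S | K ≤ blueVolume G S} {v} ≤ K * (56 / 57) ^ t := by
  have hlow (S : Finset V) (hvS : {v} ⊆ S) :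
      {S | K ≤ blueVolume G S}ᶜ.indicator 1 S ≤ (K • burnInPotential G v K) S := by
    have hvS : v ∈ S := singleton_subset_iff.1 hvS
    have hk_pos : (0 : ℝ) < closedDegIn G S v := by exact_mod_cast closedDegIn_pos G hvS
    have hvol : closedDegIn G S v ≤ blueVolume G S :=
      Finset.single_le_sum (f := fun u => (closedDegIn G S u : ℝ)) (fun u _ => by positivity) hvS
    rw [Pi.smul_apply, smul_eq_mul, burnInPotential]
    split_ifs with hreach
    · simp [hreach.trans hvol]
    · refine Set.indicator_le_self' (fun _ _ => zero_le_one) S |>.trans ?_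
      exact (one_le_div hk_pos).2 (not_le.1 hreach).le
  have hstart : burnInPotential G v K {v} ≤ 1 :=
    (burnInPotential_le_inv G v K {v}).trans
      (inv_le_one_of_one_le₀ (by exact_mod_cast closedDegIn_pos G (mem_singleton_self v)))
  calc missProb G t _ {v} ≤ (roundOp G ^ t) (K • burnInPotential G v K) {v} :=
        roundOp_pow_mono G t hlow
    _ = K * (roundOp G ^ t) (burnInPotential G v K) {v} := by
        rw [map_smul, Pi.smul_apply, smul_eq_mul]
    _ ≤ K * ((56 / 57) ^ t * burnInPotential G v K {v}) := by
        gcongr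
        exact roundOp_pow_le_of_le_mul G (by norm_num)
          (fun S hvS => roundOp_burnInPotential_le hK (singleton_subset_iff.1 hvS)) t
    _ ≤ K * ((56 / 57) ^ t * 1) := by gcongr
    _ = K * (56 / 57) ^ t := by rw [mul_one]

end BurnIn

namespace MinCodegree

variable {V : Type*} [Fintype V] [DecidableEq V] {G : SimpleGraph V} {c : ℝ} {B : Finset V}
  (hG : MinCodegree G c)
include hG

lemma le_deg (v : V) : c * Fintype.card V ≤ deg G v := by
  rw [deg_eq_card]
  exact (hG v v).trans_eq (by rw [inter_self])

lemma le_one [Nonempty V] : c ≤ 1 := by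
  obtain ⟨v⟩ := ‹Nonempty V›
  have hn : (0 : ℝ) < Fintype.card V := by exact_mod_cast Fintype.card_pos_iff.2 ⟨v⟩
  have hcard : (#(G.neighborFinset v ∩ G.neighborFinset v) : ℝ) ≤ Fintype.card V := by
    exact_mod_cast card_le_univ _
  exact le_of_mul_le_mul_right (by linarith [hG v v]) hn

lemma missProb_two_univ_le (hc : 0 ≤ c) (hB : B.Nonempty)
    (hvol : Fintype.card V ≤ blueVolume G B) :
    missProb G 2 {univ} B ≤ 2 * Fintype.card V * exp (-(c ^ 2 * Fintype.card V / 64)) := by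
  obtain ⟨v, _⟩ := id hB
  have : Nonempty V := ⟨v⟩
  have hn : (0 : ℝ) < Fintype.card V := by exact_mod_cast Fintype.card_pos
  set n : ℝ := (Fintype.card V : ℝ)
  have hexponent : (c * n / 8) ^ 2 / n = c ^ 2 * n / 64 := by
    field_simp
    norm_num
  have hfinish : ∀ S ∈ {S | ∀ x, c * n / 8 ≤ #(S ∩ G.neighborFinset x)},
      missProb G 1 {univ} S ≤ n * exp (-(c ^ 2 * n / 64)) := fun S hS =>
    (missProb_one_univ_le (by positivity) hS).trans_eq (congrArg (fun a => n * exp (-a)) hexponent)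
  have hslower : exp (-(c * n / 8)) ≤ exp (-(c ^ 2 * n / 64)) := by
    have hsq : c ^ 2 * n ≤ c * n := by
      gcongr
      exact pow_le_of_le_one hc hG.le_one two_ne_zero
    exact Real.exp_le_exp.2 (by nlinarith [mul_nonneg hc hn.le])
  calc missProb G (1 + 1) {univ} B
      ≤ n * exp (-(c * n / 8)) + n * exp (-(c ^ 2 * n / 64)) :=
        (missProb_add_le G 1 1 B (by positivity) hfinish).trans
          (add_le_add_left (hG.missProb_one_many_blue_neighbors_le hc hB hvol) _)
    _ ≤ n * exp (-(c ^ 2 * n / 64)) + n * exp (-(c ^ 2 * n / 64)) := by gcongr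
    _ = 2 * n * exp (-(c ^ 2 * n / 64)) := by ring

lemma missProb_add_two_univ_le (hc : 0 < c) {y : ℝ} (hy : 2 ≤ y)
    (hyn : y ≤ c ^ 2 * Fintype.card V / 64) (hyB : y ≤ scaledVolume G B c) {t : ℕ}
    (ht : (Fintype.card V : ℝ) ≤ 2 ^ 2 ^ t) :
    missProb G (t + 2) {univ} B ≤
      6 * t / y + 2 * Fintype.card V * exp (-(c ^ 2 * Fintype.card V / 64)) := by
  have hB : B.Nonempty := nonempty_of_scaledVolume_pos (by linarith)
  obtain ⟨v, _⟩ := id hB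
  have : Nonempty V := ⟨v⟩
  have hcap : c ^ 2 * Fintype.card V / 64 ≤ y ^ 2 ^ t := by
    calc c ^ 2 * Fintype.card V / 64 ≤ Fintype.card V := by
          nlinarith [pow_le_one₀ hc.le hG.le_one (n := 2),
            Nat.cast_nonneg (α := ℝ) (Fintype.card V)]
      _ ≤ 2 ^ 2 ^ t := ht
      _ ≤ y ^ 2 ^ t := by gcongr
  refine (missProb_add_le G t 2 B (by positivity) fun S hS => ?_).trans
    (add_le_add_left (hG.missProb_squaring_le hc (by linarith) hyn hyB t) _)
  have hfull : c ^ 2 * Fintype.card V / 64 ≤ c ^ 2 * truncVolume G S / 64 := by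
    simpa only [Set.mem_ofPred_eq, min_eq_left hcap, scaledVolume] using hS
  have hS_ne : S.Nonempty :=
    nonempty_of_scaledVolume_pos ((two_pos.trans_le (hy.trans hyn)).trans_le hfull)
  have hvol : (Fintype.card V : ℝ) ≤ truncVolume G S :=
    le_of_mul_le_mul_left (by linarith) (pow_pos hc 2)
  exact hG.missProb_two_univ_le hc.le hS_ne (hvol.trans (min_le_left _ _))

theorem one_sub_probAllBlue_singleton_le (hc : 0 < c) (v : V) {y : ℝ} (hy : 2 ≤ y)
    (hyn : 128 * y ≤ c ^ 3 * Fintype.card V) (t₁ : ℕ) {t₂ : ℕ}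
    (ht₂ : (Fintype.card V : ℝ) ≤ 2 ^ 2 ^ t₂) :
    1 - probAllBlue G {v} (t₁ + t₂ + 2) ≤ 64 * y / c ^ 2 * (56 / 57) ^ t₁ + (6 * t₂ / y +
      2 * Fintype.card V * exp (-(c ^ 2 * Fintype.card V / 64))) := by
  have : Nonempty V := ⟨v⟩
  set n : ℝ := (Fintype.card V : ℝ)
  have hcube : 128 * y ≤ c ^ 2 * n := by
    refine hyn.trans ?_
    gcongr ?_ * n
    exact pow_le_pow_of_le_one hc.le hG.le_one (by norm_num)
  have hdeg : 2 * (64 * y / c ^ 2) ≤ deg G v := by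
    refine le_trans ?_ (hG.le_deg v)
    rw [← mul_div_assoc, div_le_iff₀ (by positivity)]
    linarith
  rw [one_sub_probAllBlue, add_assoc]
  refine (missProb_add_le G t₁ (t₂ + 2) {v} (by positivity) fun S hS => ?_).trans
    (add_le_add_left (missProb_blueVolume_le (by positivity) hdeg t₁) _)
  have hyS : y ≤ scaledVolume G S c := by
    have htrunc : 64 * y / c ^ 2 ≤ truncVolume G S := by
      refine le_min hS ?_
      rw [div_le_iff₀ (by positivity)]
      linarith
    rw [div_le_iff₀ (by positivity)] at htrunc
    rw [scaledVolume]
    linarith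
  exact hG.missProb_add_two_univ_le hc hy (by linarith) hyS ht₂

end MinCodegree

section RandomGraph

variable {n : ℕ} {p : ℝ}

/-- The parameters realising the edge set of `G(n, p)` as a random subset of `Sym2 (Fin n)` with
independent memberships: loops never occur and every other pair has probability `p`. -/
noncomputable def erEdgeProb (n : ℕ) (p : ℝ) (e : Sym2 (Fin n)) : ℝ :=
  if e.IsDiag then 0 else p

lemma erEdgeProb_mem_Icc (hp : p ∈ Set.Icc 0 1) (e : Sym2 (Fin n)) :
    erEdgeProb n p e ∈ Set.Icc 0 1 := by
  rw [erEdgeProb]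
  split_ifs
  · exact ⟨le_rfl, zero_le_one⟩
  · exact hp

lemma bernoulliWeight_erEdgeProb (p : ℝ) (G : SimpleGraph (Fin n)) :
    bernoulliWeight (erEdgeProb n p) G.edgeFinset = erProb n p G := by
  have hedges : G.edgeSet.ncard = #G.edgeFinset := by
    rw [← SimpleGraph.coe_edgeFinset, Set.ncard_coe_finset]
  have hnonedges : #{e ∈ G.edgeFinsetᶜ | ¬ e.IsDiag} = n.choose 2 - #G.edgeFinset := by
    have hsdiff : {e ∈ G.edgeFinsetᶜ | ¬ e.IsDiag} =
        (⊤ : SimpleGraph (Fin n)).edgeFinset \ G.edgeFinset := by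
      ext e
      simp [and_comm]
    rw [hsdiff, card_sdiff_of_subset (SimpleGraph.edgeFinset_mono le_top),
      SimpleGraph.card_edgeFinset_top_eq_card_choose_two, Fintype.card_fin]
  rw [bernoulliWeight, erProb, hedges, ← hnonedges, ← Finset.prod_const, ← Finset.prod_const,
    Finset.prod_filter]
  congr 1 <;> refine Finset.prod_congr rfl fun e he => ?_
  · exact if_neg (G.not_isDiag_of_mem_edgeFinset he)
  · rw [erEdgeProb]
    split_ifs <;> simp_all

lemma bernoulliExp_erEdgeProb (p : ℝ) (φ : Finset (Sym2 (Fin n)) → ℝ) :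
    bernoulliExp (erEdgeProb n p) φ =
      ∑ G : SimpleGraph (Fin n), erProb n p G * φ G.edgeFinset := by
  rw [bernoulliExp_apply]
  refine (Fintype.sum_of_injective (fun G : SimpleGraph (Fin n) => G.edgeFinset)
    (fun G H h => SimpleGraph.edgeFinset_inj.1 h) _ _ (fun S hS => ?_) fun G => ?_).symm
  · obtain ⟨e, he, hdiag⟩ : ∃ e ∈ S, e.IsDiag := by
      contrapose! hS
      refine ⟨SimpleGraph.fromEdgeSet S, ?_⟩
      ext e
      simpa using hS e
    have hzero : erEdgeProb n p e = 0 := if_pos hdiag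
    rw [bernoulliWeight, Finset.prod_eq_zero he hzero, zero_mul, zero_mul]
  · rw [bernoulliWeight_erEdgeProb]

lemma graphProb_eq_bernoulliProb (p : ℝ) (E : SimpleGraph (Fin n) → Prop) :
    graphProb n p E = bernoulliProb (erEdgeProb n p) {S | E (SimpleGraph.fromEdgeSet S)} := by
  rw [bernoulliProb, bernoulliExp_erEdgeProb, graphProb]
  refine Finset.sum_congr rfl fun G _ => ?_
  by_cases hG : E G <;> simp [hG]

lemma sum_erProb (n : ℕ) (p : ℝ) : ∑ G : SimpleGraph (Fin n), erProb n p G = 1 := by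
  simpa [bernoulliExp_const] using (bernoulliExp_erEdgeProb (n := n) p fun _ => 1).symm

lemma erProb_nonneg (hp : p ∈ Set.Icc 0 1) (G : SimpleGraph (Fin n)) : 0 ≤ erProb n p G :=
  mul_nonneg (pow_nonneg hp.1 _) (pow_nonneg (sub_nonneg.2 hp.2) _)

/-- The set of edges of the path `u w x`; it degenerates to a single edge when `u = x`. -/
def pathEdges (u x w : Fin n) : Finset (Sym2 (Fin n)) := {s(u, w), s(x, w)}

lemma pairwiseDisjoint_pathEdges (u x : Fin n) :
    (({u, x}ᶜ : Finset (Fin n)) : Set (Fin n)).PairwiseDisjoint (pathEdges u x) := by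
  intro w hw w' hw' hne
  simp only [coe_compl, coe_pair, Set.mem_compl_iff, Set.mem_insert_iff,
    Set.mem_singleton_iff, not_or] at hw hw'
  simp only [Function.onFun, pathEdges, disjoint_left, mem_insert, mem_singleton]
  grind

lemma sq_le_prod_erEdgeProb_pathEdges (hp : p ∈ Set.Icc 0 1) {u x w : Fin n}
    (hw : w ∉ ({u, x} : Finset (Fin n))) :
    p ^ 2 ≤ ∏ e ∈ pathEdges u x w, erEdgeProb n p e := by
  simp only [mem_insert, mem_singleton, not_or] at hw
  rcases eq_or_ne u x with rfl | hux
  · simpa [pathEdges, erEdgeProb, Ne.symm hw.1] using pow_le_of_le_one hp.1 hp.2 two_ne_zero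
  · have hne : s(u, w) ≠ s(x, w) := fun h => hux (Sym2.congr_left.1 h)
    rw [pathEdges, Finset.prod_pair hne]
    simp [erEdgeProb, Ne.symm hw.1, Ne.symm hw.2, sq]

lemma graphProb_codegree_lt_le (hp : p ∈ Set.Icc 0 1) (u x : Fin n) :
    graphProb n p (fun G => #(G.neighborFinset u ∩ G.neighborFinset x) < p ^ 2 * (n - 2) / 4) ≤
      exp (-(3 / 8) * (p ^ 2 * (n - 2))) := by
  have hcard : (n : ℝ) - 2 ≤ #({u, x}ᶜ : Finset (Fin n)) := by
    have htwo : #({u, x} : Finset (Fin n)) ≤ 2 := card_le_two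
    have htotal := card_add_card_compl ({u, x} : Finset (Fin n))
    rw [Fintype.card_fin] at htotal
    rw [sub_le_iff_le_add]
    exact_mod_cast (by lia : n ≤ #({u, x}ᶜ : Finset (Fin n)) + 2)
  have hmean : p ^ 2 * (n - 2) ≤ ∑ w ∈ {u, x}ᶜ, ∏ e ∈ pathEdges u x w, erEdgeProb n p e := by
    calc p ^ 2 * (n - 2) ≤ #({u, x}ᶜ : Finset (Fin n)) • p ^ 2 := by
          rw [nsmul_eq_mul, mul_comm]
          gcongr
      _ ≤ _ := Finset.card_nsmul_le_sum _ _ _ fun w hw =>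
          sq_le_prod_erEdgeProb_pathEdges hp (mem_compl.1 hw)
  have htail := bernoulliProb_superset_and_count_lt_le (erEdgeProb_mem_Icc hp) ∅ _ _
    (pairwiseDisjoint_pathEdges u x) (fun w _ => disjoint_empty_left _) hmean
  rw [prod_empty, one_mul] at htail
  rw [graphProb_eq_bernoulliProb]
  refine (bernoulliProb_mono (erEdgeProb_mem_Icc hp) fun S hS => ?_).trans htail
  refine ⟨empty_subset S, lt_of_le_of_lt (Nat.cast_le.2 (card_le_card fun w hw => ?_)) hS⟩
  simp only [pathEdges, mem_filter, mem_compl, mem_insert, mem_singleton, not_or,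
    insert_subset_iff, singleton_subset_iff] at hw
  simpa [Ne.symm hw.1.1, Ne.symm hw.1.2] using hw.2

lemma graphProb_le_sum (hp : p ∈ Set.Icc 0 1) {ι : Type*} (s : Finset ι)
    {E : SimpleGraph (Fin n) → Prop} {F : ι → SimpleGraph (Fin n) → Prop}
    (h : ∀ G, E G → ∃ i ∈ s, F i G) : graphProb n p E ≤ ∑ i ∈ s, graphProb n p (F i) := by
  simp only [graphProb_eq_bernoulliProb]
  exact bernoulliProb_le_sum (erEdgeProb_mem_Icc hp) s fun S hS => by
    obtain ⟨i, hi, hF⟩ := h _ hS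
    exact Set.mem_biUnion hi hF

lemma graphProb_not_minCodegree_le (hp : p ∈ Set.Icc 0 1) (hn : 4 ≤ n) :
    graphProb n p (fun G => ¬ MinCodegree G (p ^ 2 / 8)) ≤
      n ^ 2 * exp (-(3 / 8) * (p ^ 2 * (n - 2))) := by
  have hn' : (4 : ℝ) ≤ n := by exact_mod_cast hn
  have hbad (G : SimpleGraph (Fin n)) (hG : ¬ MinCodegree G (p ^ 2 / 8)) :
      ∃ i ∈ (univ : Finset (Fin n × Fin n)),
        #(G.neighborFinset i.1 ∩ G.neighborFinset i.2) < p ^ 2 * (n - 2) / 4 := by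
    simp only [MinCodegree, not_forall, not_le, Fintype.card_fin] at hG
    obtain ⟨u, x, hux⟩ := hG
    exact ⟨(u, x), mem_univ _, hux.trans_le (by nlinarith [sq_nonneg p])⟩
  calc graphProb n p (fun G => ¬ MinCodegree G (p ^ 2 / 8))
      ≤ ∑ i : Fin n × Fin n, graphProb n p (fun G =>
          #(G.neighborFinset i.1 ∩ G.neighborFinset i.2) < p ^ 2 * (n - 2) / 4) :=
        graphProb_le_sum hp univ hbad
    _ ≤ ∑ _i : Fin n × Fin n, exp (-(3 / 8) * (p ^ 2 * (n - 2))) :=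
        Finset.sum_le_sum fun i _ => graphProb_codegree_lt_le hp i.1 i.2
    _ = n ^ 2 * exp (-(3 / 8) * (p ^ 2 * (n - 2))) := by
        rw [sum_const, card_univ, nsmul_eq_mul, Fintype.card_prod, Fintype.card_fin, Nat.cast_mul,
          sq (n : ℝ)]

lemma prPZFwithin_mem_Icc (hp : p ∈ Set.Icc 0 1) (v : Fin n) (ℓ : ℕ) :
    prPZFwithin n p v ℓ ∈ Set.Icc 0 1 := by
  refine ⟨Finset.sum_nonneg fun G _ =>
    mul_nonneg (erProb_nonneg hp G) (probAllBlue_mem_Icc G {v} ℓ).1, ?_⟩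
  rw [← sum_erProb n p]
  exact Finset.sum_le_sum fun G _ =>
    mul_le_of_le_one_right (erProb_nonneg hp G) (probAllBlue_mem_Icc G {v} ℓ).2

lemma monotone_prPZFwithin (hp : p ∈ Set.Icc 0 1) (v : Fin n) : Monotone (prPZFwithin n p v) :=
  fun _ _ hℓ => Finset.sum_le_sum fun G _ =>
    mul_le_mul_of_nonneg_left (monotone_probAllBlue G {v} hℓ) (erProb_nonneg hp G)

lemma prPZFwithin_le (hp : p ∈ Set.Icc 0 1) (hn : 2 ≤ n) (v : Fin n) (ℓ : ℕ) :
    prPZFwithin n p v ℓ ≤ 2 ^ ℓ / logb 2 n := by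
  calc prPZFwithin n p v ℓ
      ≤ ∑ G : SimpleGraph (Fin n), erProb n p G * (2 ^ ℓ / logb 2 n) :=
        Finset.sum_le_sum fun G _ => mul_le_mul_of_nonneg_left
          (by simpa using probAllBlue_singleton_le G v ℓ (by simpa using hn)) (erProb_nonneg hp G)
    _ = 2 ^ ℓ / logb 2 n := by rw [← Finset.sum_mul, sum_erProb, one_mul]

lemma one_sub_prPZFwithin_le_graphProb_add (hp : p ∈ Set.Icc 0 1) (v : Fin n) (ℓ : ℕ)
    (E : SimpleGraph (Fin n) → Prop) {ε : ℝ} (hε : 0 ≤ ε)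
    (h : ∀ G, E G → 1 - probAllBlue G {v} ℓ ≤ ε) :
    1 - prPZFwithin n p v ℓ ≤ graphProb n p (fun G => ¬ E G) + ε := by
  have hsum : ∑ G : SimpleGraph (Fin n), erProb n p G * (1 - probAllBlue G {v} ℓ) ≤
      graphProb n p (fun G => ¬ E G) + ∑ G : SimpleGraph (Fin n), erProb n p G * ε := by
    rw [graphProb, ← Finset.sum_add_distrib]
    refine Finset.sum_le_sum fun G _ => ?_
    have hnonneg := erProb_nonneg hp G
    split_ifs with hE
    · rw [zero_add]
      exact mul_le_mul_of_nonneg_left (h G hE) hnonneg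
    · nlinarith [(probAllBlue_mem_Icc G {v} ℓ).1, mul_nonneg hnonneg hε]
  simpa only [prPZFwithin, mul_sub, mul_one, Finset.sum_sub_distrib, ← Finset.sum_mul, sum_erProb,
    one_mul] using hsum

lemma one_sub_prPZFwithin_le (hp : p ∈ Set.Ioc 0 1) {c y : ℝ} (hc : c = p ^ 2 / 8) (hn : 4 ≤ n)
    (v : Fin n) (hy : 2 ≤ y) (hyn : 128 * y ≤ c ^ 3 * n) (t₁ : ℕ) {t₂ : ℕ}
    (ht₂ : (n : ℝ) ≤ 2 ^ 2 ^ t₂) :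
    1 - prPZFwithin n p v (t₁ + t₂ + 2) ≤
      64 * y / c ^ 2 * (56 / 57) ^ t₁ + 6 * t₂ / y + 3 * n ^ 2 * exp (-(c ^ 2 * n / 64)) := by
  have hp_Icc : p ∈ Set.Icc 0 1 := ⟨hp.1.le, hp.2⟩
  have hc_pos : 0 < c := hc ▸ (by have := hp.1; positivity)
  have hn' : (4 : ℝ) ≤ n := by exact_mod_cast hn
  have hc_le : c ^ 2 ≤ c := by
    have hp_sq : p ^ 2 ≤ 1 := pow_le_one₀ hp.1.le hp.2
    exact pow_le_of_le_one hc_pos.le (by linarith) two_ne_zero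
  have hgraph : graphProb n p (fun G => ¬ MinCodegree G c) ≤
      n ^ 2 * exp (-(c ^ 2 * n / 64)) := by
    rw [hc]
    refine (graphProb_not_minCodegree_le hp_Icc hn).trans ?_
    gcongr
    rw [← hc]
    nlinarith
  have hbound := one_sub_prPZFwithin_le_graphProb_add hp_Icc v (t₁ + t₂ + 2)
    (fun G => MinCodegree G c) (by positivity) fun G hG =>
      hG.one_sub_probAllBlue_singleton_le hc_pos v hy (by rwa [Fintype.card_fin]) t₁
        (by rwa [Fintype.card_fin])
  rw [Fintype.card_fin] at hbound
  have hn_sq : (n : ℝ) * exp (-(c ^ 2 * n / 64)) ≤ n ^ 2 * exp (-(c ^ 2 * n / 64)) := by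
    gcongr
    exact le_self_pow₀ (by linarith) two_ne_zero
  linarith

end RandomGraph

section Asymptotics

/-- The growth scale `log₂ log₂ n` of the propagation time. -/
noncomputable def logbLogb (n : ℕ) : ℝ := logb 2 (logb 2 n)

lemma tendsto_logb_natCast : Tendsto (fun n : ℕ => logb 2 n) atTop atTop :=
  (Real.tendsto_logb_atTop one_lt_two).comp tendsto_natCast_atTop_atTop

lemma tendsto_logbLogb : Tendsto logbLogb atTop atTop :=
  (Real.tendsto_logb_atTop one_lt_two).comp tendsto_logb_natCast

lemma logb_pos_of_two_le {n : ℕ} (hn : 2 ≤ n) : 0 < logb 2 (n : ℝ) :=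
  Real.logb_pos one_lt_two (by exact_mod_cast hn)

lemma two_rpow_logbLogb {n : ℕ} (hn : 2 ≤ n) : (2 : ℝ) ^ logbLogb n = logb 2 n :=
  Real.rpow_logb two_pos (by norm_num) (logb_pos_of_two_le hn)

lemma natCast_le_two_pow_two_pow_ceil_logbLogb {n : ℕ} (hn : 2 ≤ n) :
    (n : ℝ) ≤ 2 ^ 2 ^ ⌈logbLogb n⌉₊ := by
  rw [← Real.rpow_natCast, ← Real.logb_le_iff_le_rpow one_lt_two (by positivity),
    ← two_rpow_logbLogb hn, Nat.cast_pow, Nat.cast_ofNat, ← Real.rpow_natCast]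
  exact Real.rpow_le_rpow_of_exponent_le one_le_two (Nat.le_ceil _)

lemma eventually_mul_logb_pow_le_sqrt (C : ℝ) (k : ℕ) :
    ∀ᶠ n : ℕ in atTop, C * logb 2 n ^ k ≤ √n := by
  have hlittle : (fun x : ℝ => C * logb 2 x ^ k) =o[atTop] fun x => x ^ (1 / 2 : ℝ) := by
    have h := (isLittleO_log_rpow_rpow_atTop k one_half_pos).const_mul_left (C / log 2 ^ k)
    refine h.congr_left fun x => ?_
    rw [Real.rpow_natCast, Real.logb, div_pow]
    ring
  filter_upwards [(hlittle.comp_tendsto tendsto_natCast_atTop_atTop).bound one_pos] with n hn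
  simp only [Function.comp_apply, one_mul, ← Real.sqrt_eq_rpow, Real.norm_eq_abs] at hn
  exact (le_abs_self _).trans (hn.trans_eq (abs_of_nonneg (Real.sqrt_nonneg _)))

lemma eventually_mul_logbLogb_sq_le_sqrt :
    ∀ᶠ n : ℕ in atTop, 128 * logbLogb n ^ 2 ≤ √n := by
  filter_upwards [eventually_mul_logb_pow_le_sqrt (128 * 4) 2, eventually_ge_atTop 2,
    tendsto_logbLogb.eventually_ge_atTop 0] with n hsqrt hn hL
  have hlog_two : 1 / 2 < log 2 := by linarith [Real.log_two_gt_d9]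
  have hle : logbLogb n ≤ 2 * logb 2 n := by
    have hlogb := logb_pos_of_two_le hn
    rw [logbLogb, Real.logb, div_le_iff₀ (by linarith)]
    nlinarith [Real.log_le_self hlogb.le]
  nlinarith [pow_le_pow_left₀ hL hle 2]

lemma pow_ceil_mul_log_le_inv {K : ℝ} (hK : 0 < K) :
    (56 / 57 : ℝ) ^ ⌈57 * log K⌉₊ ≤ K⁻¹ := by
  calc (56 / 57 : ℝ) ^ ⌈57 * log K⌉₊ ≤ exp (-(1 / 57)) ^ ⌈57 * log K⌉₊ := by
        gcongr
        linarith [Real.add_one_le_exp (-(1 / 57 : ℝ))]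
    _ = exp (⌈57 * log K⌉₊ * -(1 / 57)) := (Real.exp_nat_mul _ _).symm
    _ ≤ exp (-log K) := by
        gcongr
        linarith [Nat.le_ceil (57 * log K)]
    _ = K⁻¹ := by rw [Real.exp_neg, Real.exp_log hK]

/-- The number of burn-in rounds when `L = log₂ log₂ n` and all codegrees are at least `c * n`;
it makes the failure probability of the burn-in at most `1 / L`. -/
noncomputable def burnInRounds (c L : ℝ) : ℕ := ⌈57 * log (64 * L ^ 3 / c ^ 2)⌉₊

lemma one_sub_prPZFwithin_burnInRounds_le {n : ℕ} {p c L : ℝ} (hp : p ∈ Set.Ioc 0 1)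
    (hc : c = p ^ 2 / 8) (hn : 4 ≤ n) (v : Fin n) (hL : 2 ≤ L) (hLn : 128 * L ^ 2 ≤ c ^ 3 * n)
    (hn_le : (n : ℝ) ≤ 2 ^ 2 ^ ⌈L⌉₊) :
    1 - prPZFwithin n p v (burnInRounds c L + ⌈L⌉₊ + 2) ≤
      13 / L + 3 * n ^ 2 * exp (-(c ^ 2 * n / 64)) := by
  have hL_pos : 0 < L := by linarith
  have hc_pos : 0 < c := hc ▸ (by have := hp.1; positivity)
  have hburn : 64 * L ^ 2 / c ^ 2 * (56 / 57) ^ burnInRounds c L ≤ 1 / L := by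
    calc 64 * L ^ 2 / c ^ 2 * (56 / 57) ^ burnInRounds c L
        ≤ 64 * L ^ 2 / c ^ 2 * (64 * L ^ 3 / c ^ 2)⁻¹ := by
          gcongr
          exact pow_ceil_mul_log_le_inv (by positivity)
      _ = 1 / L := by field_simp
  have hceil : 6 * ⌈L⌉₊ / L ^ 2 ≤ 12 / L := by
    rw [div_le_div_iff₀ (by positivity) hL_pos]
    nlinarith [Nat.ceil_lt_add_one hL_pos.le]
  have hbound := one_sub_prPZFwithin_le hp hc hn v (y := L ^ 2) (by nlinarith) hLn
    (burnInRounds c L) hn_le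
  calc 1 - prPZFwithin n p v (burnInRounds c L + ⌈L⌉₊ + 2)
      ≤ 1 / L + 12 / L + 3 * n ^ 2 * exp (-(c ^ 2 * n / 64)) := by linarith
    _ = 13 / L + 3 * n ^ 2 * exp (-(c ^ 2 * n / 64)) := by ring

lemma prPZFwithin_ceil_sub_one_le {n : ℕ} {p e : ℝ} (hp : p ∈ Set.Icc 0 1) (hn : 2 ≤ n)
    (v : Fin n) (hL : 0 ≤ logbLogb n) (he : e ≤ 1) :
    prPZFwithin n p v (⌈(1 - e) * logbLogb n⌉₊ - 1) ≤ 2 ^ (-(e * logbLogb n)) := by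
  have hnonneg : 0 ≤ (1 - e) * logbLogb n := mul_nonneg (sub_nonneg.2 he) hL
  have hrounds : ((⌈(1 - e) * logbLogb n⌉₊ - 1 : ℕ) : ℝ) ≤ (1 - e) * logbLogb n := by
    rcases Nat.eq_zero_or_pos ⌈(1 - e) * logbLogb n⌉₊ with hzero | hpos
    · simpa [hzero] using hnonneg
    · rw [Nat.cast_sub hpos, Nat.cast_one, sub_le_iff_le_add]
      exact (Nat.ceil_lt_add_one hnonneg).le
  refine (prPZFwithin_le hp hn v _).trans ?_
  rw [← two_rpow_logbLogb hn, ← Real.rpow_natCast, ← Real.rpow_sub two_pos]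
  exact Real.rpow_le_rpow_of_exponent_le one_le_two (by linarith)

lemma log_logb_two_natCast (n : ℕ) : log (logb 2 n) = logbLogb n * log 2 :=
  (div_mul_cancel₀ _ (Real.log_pos one_lt_two).ne').symm

section Density

variable {p h : ℕ → ℝ}

lemma eventually_pos_of_eventually_eq_log_rpow
    (hpoly : ∀ᶠ n : ℕ in atTop, p n = log n ^ (-(h n))) : ∀ᶠ n in atTop, 0 < p n := by
  filter_upwards [hpoly, eventually_ge_atTop 2] with n hpn hn
  rw [hpn]
  exact Real.rpow_pos_of_pos (Real.log_pos (by exact_mod_cast hn)) _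

lemma tendsto_log_div_logbLogb (hh : Tendsto h atTop (nhds 0))
    (hpoly : ∀ᶠ n : ℕ in atTop, p n = log n ^ (-(h n))) :
    Tendsto (fun n => log (p n) / logbLogb n) atTop (nhds 0) := by
  have hlim : Tendsto (fun n => -h n * (log 2 + log (log 2) / logbLogb n)) atTop (nhds 0) := by
    simpa using hh.neg.mul ((tendsto_logbLogb.const_div_atTop (log (log 2))).const_add (log 2))
  refine hlim.congr' ?_
  filter_upwards [hpoly, eventually_ge_atTop 2, tendsto_logbLogb.eventually_gt_atTop 0]
    with n hpn hn hL
  have hlog_two : 0 < log 2 := Real.log_pos one_lt_two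
  have hlog : 0 < log (n : ℝ) := Real.log_pos (by exact_mod_cast hn)
  have hloglog : log (log (n : ℝ)) = logbLogb n * log 2 + log (log 2) := by
    rw [← log_logb_two_natCast, Real.logb, Real.log_div hlog.ne' hlog_two.ne', sub_add_cancel]
  rw [hpn, Real.log_rpow hlog, hloglog]
  field_simp

lemma eventually_inv_logb_le (hpos : ∀ᶠ n in atTop, 0 < p n)
    (hlog : Tendsto (fun n => log (p n) / logbLogb n) atTop (nhds 0)) :
    ∀ᶠ n : ℕ in atTop, (logb 2 n)⁻¹ ≤ p n := by
  have hlog_two : -log 2 < 0 := neg_lt_zero.2 (Real.log_pos one_lt_two)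
  filter_upwards [hpos, hlog.eventually_const_le hlog_two, eventually_ge_atTop 2,
    tendsto_logbLogb.eventually_gt_atTop 0] with n hpn hratio hn hL
  rw [← Real.log_le_log_iff (inv_pos.2 (logb_pos_of_two_le hn)) hpn, Real.log_inv,
    log_logb_two_natCast]
  rw [le_div_iff₀ hL] at hratio
  linarith

lemma eventually_sqrt_le_pow_mul (hpos : ∀ᶠ n in atTop, 0 < p n)
    (hlog : Tendsto (fun n => log (p n) / logbLogb n) atTop (nhds 0)) :
    ∀ᶠ n : ℕ in atTop, √n ≤ (p n ^ 2 / 8) ^ 3 * n := by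
  filter_upwards [eventually_inv_logb_le hpos hlog, eventually_mul_logb_pow_le_sqrt 512 6,
    eventually_ge_atTop 2] with n hinv hsqrt hn
  have hlogb := logb_pos_of_two_le hn
  calc √n = (logb 2 n)⁻¹ ^ 6 / 512 * (512 * logb 2 n ^ 6 * √n) := by field_simp
    _ ≤ p n ^ 6 / 512 * (√n * √n) := by gcongr
    _ = (p n ^ 2 / 8) ^ 3 * n := by
        rw [Real.mul_self_sqrt (by positivity)]
        ring

/-- The relative deviation of the propagation time from `log₂ log₂ n`: it accounts for the burn-in
rounds, the rounding and the two finishing rounds, and `√(log₂ log₂ n)` rounds of slack for the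
lower bound. -/
noncomputable def deviation (p : ℕ → ℝ) (n : ℕ) : ℝ :=
  (burnInRounds (p n ^ 2 / 8) (logbLogb n) + 4 + √(logbLogb n)) / logbLogb n

lemma tendsto_burnInRounds_div_logbLogb (hpos : ∀ᶠ n in atTop, 0 < p n) (hp : ∀ n, p n ≤ 1)
    (hlog : Tendsto (fun n => log (p n) / logbLogb n) atTop (nhds 0)) :
    Tendsto (fun n => burnInRounds (p n ^ 2 / 8) (logbLogb n) / logbLogb n) atTop (nhds 0) := by
  have hlogL : Tendsto (fun n => log (logbLogb n) / logbLogb n) atTop (nhds 0) :=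
    Real.isLittleO_log_id_atTop.tendsto_div_nhds_zero.comp tendsto_logbLogb
  have hlim : Tendsto (fun n => 57 * (log 4096 / logbLogb n + 3 * (log (logbLogb n) / logbLogb n)
      - 4 * (log (p n) / logbLogb n)) + 1 / logbLogb n) atTop (nhds 0) := by
    simpa using ((((tendsto_logbLogb.const_div_atTop (log 4096)).add (hlogL.const_mul 3)).sub
      (hlog.const_mul 4)).const_mul 57).add (tendsto_logbLogb.const_div_atTop 1)
  refine squeeze_zero' ?_ ?_ hlim
  · filter_upwards [tendsto_logbLogb.eventually_ge_atTop 0] with n hL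
    positivity
  · filter_upwards [hpos, tendsto_logbLogb.eventually_ge_atTop 1] with n hpn hL
    have hK : 64 * logbLogb n ^ 3 / (p n ^ 2 / 8) ^ 2 = 4096 * logbLogb n ^ 3 / p n ^ 4 := by
      field_simp
      norm_num
    have hlogK : log (4096 * logbLogb n ^ 3 / p n ^ 4) =
        log 4096 + 3 * log (logbLogb n) - 4 * log (p n) := by
      rw [Real.log_div (by positivity) (by positivity), Real.log_mul (by norm_num) (by positivity),
        Real.log_pow, Real.log_pow]
      norm_cast
    have hlogK_nonneg : 0 ≤ log (4096 * logbLogb n ^ 3 / p n ^ 4) := by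
      refine Real.log_nonneg ((one_le_div (by positivity)).2 ?_)
      linarith [pow_le_one₀ (n := 4) hpn.le (hp n), one_le_pow₀ (n := 3) hL]
    have hceil := Nat.ceil_lt_add_one (mul_nonneg (by norm_num : (0 : ℝ) ≤ 57) hlogK_nonneg)
    rw [burnInRounds, hK, div_le_iff₀ (by positivity)]
    refine hceil.le.trans_eq ?_
    rw [hlogK]
    field_simp

lemma tendsto_deviation (hpos : ∀ᶠ n in atTop, 0 < p n) (hp : ∀ n, p n ≤ 1)
    (hlog : Tendsto (fun n => log (p n) / logbLogb n) atTop (nhds 0)) :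
    Tendsto (deviation p) atTop (nhds 0) := by
  have hsqrt : Tendsto (fun n => √(logbLogb n) / logbLogb n) atTop (nhds 0) := by
    simp only [Real.sqrt_div_self]
    exact (Real.tendsto_sqrt_atTop.comp tendsto_logbLogb).inv_tendsto_atTop
  have hlim := ((tendsto_burnInRounds_div_logbLogb hpos hp hlog).add
    (tendsto_logbLogb.const_div_atTop 4)).add hsqrt
  rw [add_zero, add_zero] at hlim
  exact hlim.congr fun n => by rw [deviation, add_div, add_div]

lemma deviation_mul_logbLogb {n : ℕ} (hL : 0 < logbLogb n) :
    deviation p n * logbLogb n =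
      burnInRounds (p n ^ 2 / 8) (logbLogb n) + 4 + √(logbLogb n) :=
  div_mul_cancel₀ _ hL.ne'

lemma rounds_le_floor_deviation {n : ℕ} (hL : 0 < logbLogb n) :
    burnInRounds (p n ^ 2 / 8) (logbLogb n) + ⌈logbLogb n⌉₊ + 2 ≤
      ⌊(1 + deviation p n) * logbLogb n⌋₊ := by
  refine Nat.le_floor ?_
  rw [add_mul, deviation_mul_logbLogb hL]
  push_cast
  linarith [Nat.ceil_lt_add_one hL.le, Real.sqrt_nonneg (logbLogb n)]

lemma eventually_one_sub_prPZFwithin_le (hpos : ∀ᶠ n in atTop, 0 < p n) (hp : ∀ n, p n ≤ 1)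
    (hlog : Tendsto (fun n => log (p n) / logbLogb n) atTop (nhds 0)) :
    ∀ᶠ n in atTop, ∀ v : Fin n,
      1 - prPZFwithin n (p n) v ⌊(1 + deviation p n) * logbLogb n⌋₊ ≤
        13 / logbLogb n + 3 * n ^ 2 * exp (-(√n / 64)) := by
  filter_upwards [hpos, eventually_sqrt_le_pow_mul hpos hlog, eventually_mul_logbLogb_sq_le_sqrt,
    tendsto_logbLogb.eventually_ge_atTop 2, eventually_ge_atTop 4] with n hpn hsqrt hLn hL hn v
  have hp_sq : p n ^ 2 ≤ 1 := pow_le_one₀ hpn.le (hp n)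
  have hpow : (p n ^ 2 / 8) ^ 3 ≤ (p n ^ 2 / 8) ^ 2 :=
    pow_le_pow_of_le_one (by positivity) (by linarith) (by norm_num)
  have hsqrt' : √n ≤ (p n ^ 2 / 8) ^ 2 * n := hsqrt.trans (by gcongr)
  calc 1 - prPZFwithin n (p n) v ⌊(1 + deviation p n) * logbLogb n⌋₊
      ≤ 1 - prPZFwithin n (p n) v
          (burnInRounds (p n ^ 2 / 8) (logbLogb n) + ⌈logbLogb n⌉₊ + 2) :=
        sub_le_sub_left (monotone_prPZFwithin ⟨hpn.le, hp n⟩ v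
          (rounds_le_floor_deviation (by linarith))) 1
    _ ≤ 13 / logbLogb n + 3 * n ^ 2 * exp (-((p n ^ 2 / 8) ^ 2 * n / 64)) :=
        one_sub_prPZFwithin_burnInRounds_le ⟨hpn, hp n⟩ rfl hn v hL (hLn.trans hsqrt)
          (natCast_le_two_pow_two_pow_ceil_logbLogb (by lia))
    _ ≤ 13 / logbLogb n + 3 * n ^ 2 * exp (-(√n / 64)) := by gcongr

lemma tendsto_upper_error :
    Tendsto (fun n : ℕ => 13 / logbLogb n + 3 * n ^ 2 * exp (-(√n / 64))) atTop (nhds 0) := by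
  have hsqrt : Tendsto (fun n : ℕ => √(n : ℝ)) atTop atTop :=
    Real.tendsto_sqrt_atTop.comp tendsto_natCast_atTop_atTop
  have hexp := ((tendsto_rpow_mul_exp_neg_mul_atTop_nhds_zero 4 (1 / 64) (by norm_num)).comp
    hsqrt).const_mul 3
  have hlim := (tendsto_logbLogb.const_div_atTop 13).add hexp
  rw [mul_zero, add_zero] at hlim
  refine hlim.congr fun n => ?_
  have hpow : √(n : ℝ) ^ (4 : ℝ) = (n : ℝ) ^ 2 := by
    rw [Real.rpow_ofNat, show 4 = 2 * 2 from rfl, pow_mul, Real.sq_sqrt n.cast_nonneg]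
  rw [Function.comp_apply, hpow, mul_assoc]
  ring_nf

lemma eventually_prPZFwithin_le (hpos : ∀ᶠ n in atTop, 0 < p n) (hp : ∀ n, p n ≤ 1)
    (hlog : Tendsto (fun n => log (p n) / logbLogb n) atTop (nhds 0)) :
    ∀ᶠ n in atTop, ∀ v : Fin n,
      prPZFwithin n (p n) v (⌈(1 - deviation p n) * logbLogb n⌉₊ - 1) ≤
        2 ^ (-√(logbLogb n)) := by
  filter_upwards [hpos, tendsto_logbLogb.eventually_gt_atTop 0, eventually_ge_atTop 2,
    (tendsto_deviation hpos hp hlog).eventually_le_const one_pos] with n hpn hL hn hdev v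
  refine (prPZFwithin_ceil_sub_one_le ⟨hpn.le, hp n⟩ hn v hL.le hdev).trans ?_
  refine Real.rpow_le_rpow_of_exponent_le one_le_two (neg_le_neg ?_)
  rw [deviation_mul_logbLogb hL]
  exact le_add_of_nonneg_left (by positivity)

lemma tendsto_lower_error :
    Tendsto (fun n => (2 : ℝ) ^ (-√(logbLogb n))) atTop (nhds 0) :=
  (tendsto_rpow_atBot_of_base_gt_one 2 one_lt_two).comp <| tendsto_neg_atTop_atBot.comp <|
    Real.tendsto_sqrt_atTop.comp tendsto_logbLogb

end Density

end Asymptotics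

end PZF

/-- If `p = (log n)^{-o(1)}` (i.e. `p n = (log n)^{-h n}` with `h → 0`),
then for each vertex `v` of `G(n,p)`, a.a.s. `pt_pzf(G(n,p), v) = (1 + o(1)) log₂ log₂ n`:
a.a.s. `pt ≤ (1 + e n) log₂ log₂ n` and a.a.s. `pt ≥ (1 - e n) log₂ log₂ n` for some
`e → 0`. -/
theorem pzf_asymptotics_dense
    (p : ℕ → ℝ) (hp : ∀ n, 0 ≤ p n ∧ p n ≤ 1)
    (h : ℕ → ℝ) (hh : Tendsto h atTop (nhds 0))
    (hpoly : ∀ᶠ n in atTop, p n = Real.log n ^ (-(h n)))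
    (v : (n : ℕ) → Fin (n + 1)) :
    ∃ e : ℕ → ℝ,
      Tendsto e atTop (nhds 0) ∧
      Tendsto
        (fun n => PZF.prPZFwithin (n + 1) (p (n + 1)) (v n)
          ⌊(1 + e n) * Real.logb 2 (Real.logb 2 ((n : ℝ) + 1))⌋₊)
        atTop (nhds 1) ∧
      Tendsto
        (fun n => PZF.prPZFwithin (n + 1) (p (n + 1)) (v n)
          (⌈(1 - e n) * Real.logb 2 (Real.logb 2 ((n : ℝ) + 1))⌉₊ - 1))
        atTop (nhds 0) := by
  have hpos := PZF.eventually_pos_of_eventually_eq_log_rpow hpoly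
  have hlog := PZF.tendsto_log_div_logbLogb hh hpoly
  have hp_le (n : ℕ) : p n ≤ 1 := (hp n).2
  have hsucc : Tendsto (fun n : ℕ => n + 1) atTop atTop := tendsto_add_atTop_nat 1
  have hscale (n : ℕ) : Real.logb 2 (Real.logb 2 ((n : ℝ) + 1)) = PZF.logbLogb (n + 1) := by
    rw [PZF.logbLogb, Nat.cast_succ]
  simp only [hscale]
  refine ⟨fun n => PZF.deviation p (n + 1), (PZF.tendsto_deviation hpos hp_le hlog).comp hsucc,
    ?_, ?_⟩
  · have herror := (PZF.tendsto_upper_error.comp hsucc).const_sub 1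
    rw [sub_zero] at herror
    refine tendsto_of_tendsto_of_tendsto_of_le_of_le' herror tendsto_const_nhds ?_
      (Eventually.of_forall fun n => (PZF.prPZFwithin_mem_Icc (hp _) _ _).2)
    filter_upwards [hsucc.eventually (PZF.eventually_one_sub_prPZFwithin_le hpos hp_le hlog)]
      with n hn using sub_le_comm.1 (hn (v n))
  · refine squeeze_zero' (Eventually.of_forall fun n => (PZF.prPZFwithin_mem_Icc (hp _) _ _).1) ?_
      (PZF.tendsto_lower_error.comp hsucc)
    filter_upwards [hsucc.eventually (PZF.eventually_prPZFwithin_le hpos hp_le hlog)]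
      with n hn using hn (v n)
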